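/- arXiv:1502.04178 — 2 statements merged into one kernel-verified Lean document; each statement's English description precedes it below -/
import Mathlib

section
/- Let f be C²-smooth on an open neighbourhood of S^{n-1} with ∫ f dσ_{n-1} = 0. Then ∫ f² dσ_{n-1} ≤ (1/(n−1)) ∫ ‖f''_S‖²_HS dσ_{n-1}. Moreover, if in addition the restriction of f to S^{n-1} is orthogonal to all linear functions, then ∫ f² dσ_{n-1} ≤ (1/(2n(n+2))) ∫ ‖f''_S‖²_HS dσ_{n-1}. -/
open MeasureTheory Metric Filter
open scoped RealInnerProductSpace ENNReal NNReal

noncomputable section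

namespace SecondOrderConc

/-- Euclidean space ℝⁿ. -/
abbrev E (n : ℕ) : Type := EuclideanSpace ℝ (Fin n)

/-- The uniform (normalized rotation-invariant) probability measure `σ_{n-1}`
on the unit sphere `S^{n-1}`, viewed as a measure on the ambient space ℝⁿ. -/
def sphMeasure (n : ℕ) : Measure (E n) :=
  ((((volume : Measure (E n)).toSphere).map Subtype.val) Set.univ)⁻¹ •
    (((volume : Measure (E n)).toSphere).map Subtype.val)

variable {n : ℕ}

/-- Euclidean Hessian of `f` at `x`, as a continuous linear operator on ℝⁿ. -/
def hess (f : E n → ℝ) (x : E n) : E n →L[ℝ] E n :=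
  fderiv ℝ (gradient f) x

/-- Squared Hilbert–Schmidt norm of an operator on ℝⁿ. -/
def hsNormSq (A : E n →L[ℝ] E n) : ℝ :=
  ∑ i : Fin n, ‖A (EuclideanSpace.single i 1)‖ ^ 2

/-- Orthogonal projection of ℝⁿ onto `θ^⊥` (for a unit vector `θ`). -/
def projPerp (θ : E n) : E n →L[ℝ] E n :=
  ContinuousLinearMap.id ℝ (E n) - (innerSL ℝ θ).smulRight θ

/-- Spherical gradient `∇_S f(θ) = ∇f(θ) − ⟨∇f(θ),θ⟩θ`. -/
def sgrad (f : E n → ℝ) (θ : E n) : E n :=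
  gradient f θ - ⟪gradient f θ, θ⟫ • θ

/-- Spherical Hessian `f''_S(θ) = P_{θ^⊥} (f''(θ) − ⟨∇f(θ),θ⟩ I_n) P_{θ^⊥}`. -/
def sHess (f : E n → ℝ) (θ : E n) : E n →L[ℝ] E n :=
  (projPerp θ).comp
    ((hess f θ - ⟪gradient f θ, θ⟫ • ContinuousLinearMap.id ℝ (E n)).comp (projPerp θ))

/-- Spherical Laplacian `Δ_S f(θ) = Tr f''_S(θ)`. -/
def sLap (f : E n → ℝ) (θ : E n) : ℝ :=
  LinearMap.trace ℝ (E n) (sHess f θ).toLinearMap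

/-- Euclidean Laplacian `Δ f = Tr f''`. -/
def eLap (f : E n → ℝ) (x : E n) : ℝ :=
  LinearMap.trace ℝ (E n) (hess f x).toLinearMap

/-- 0-homogeneous extension to `ℝⁿ \ {0}` of (the restriction to the sphere of) `g`. -/
def ext0 (g : E n → ℝ) : E n → ℝ := fun x => g (‖x‖⁻¹ • x)

section Abstract

variable {ι M H : Type*} [Fintype ι] [AddCommGroup M] [Module ℝ M]
  [NormedAddCommGroup H] [InnerProductSpace ℝ H]
  {V : ℕ → Submodule ℝ M} {T : M →ₗ[ℝ] H} {D : ι → M →ₗ[ℝ] M} {lam : ℕ → ℝ}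

lemma exists_orthogonal_approx (W : Submodule ℝ M) [FiniteDimensional ℝ W] (T : M →ₗ[ℝ] H) (g : H) :
    ∃ b ∈ W, ∀ p ∈ W, ⟪g - T b, T p⟫ = 0 := by
  have hfd : FiniteDimensional ℝ (W.map T) := inferInstance
  obtain ⟨b, hb, hbe⟩ := (Submodule.mem_map).1 ((W.map T).starProjection_apply_mem g)
  refine ⟨b, hb, fun p hp => ?_⟩
  rw [hbe]
  exact Submodule.starProjection_inner_eq_zero g (T p) (Submodule.mem_map_of_mem hp)

lemma skew_energy_cross (hskew : ∀ i p q, ⟪T (D i p), T q⟫ = -⟪T p, T (D i q)⟫) (p q : M) :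
    ∑ i, ⟪T (D i p), T (D i q)⟫ = -⟪∑ i, T (D i (D i p)), T q⟫ := by
  rw [sum_inner, ← Finset.sum_neg_distrib]
  exact Finset.sum_congr rfl fun i _ => by rw [hskew i (D i p) q, neg_neg]

/-- Let `D i` be skew for the form pulled back along `T` and preserve a filtration `V`, and let
`∑ i, D i ∘ D i` act on `V (d + 1)` modulo `V d` as the scalar `-lam (d + 1)`. Then elements of the
filtration orthogonal to `V k` satisfy a Poincaré inequality with constant `lam (k + 1)`. -/
lemma filtered_spectral_gap [∀ d, FiniteDimensional ℝ (V d)] (hV : Monotone V) (hlam : Monotone lam)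
    (hD : ∀ i d, ∀ p ∈ V d, D i p ∈ V d)
    (hskew : ∀ i p q, ⟪T (D i p), T q⟫ = -⟪T p, T (D i q)⟫)
    (heig : ∀ d, ∀ p ∈ V (d + 1), ∃ q ∈ V d,
      ∑ i, T (D i (D i p)) = -(lam (d + 1) • T p) + T q)
    (k : ℕ) (d : ℕ) : ∀ a ∈ V d, (∀ p ∈ V k, ⟪T a, T p⟫ = 0) →
      lam (k + 1) * ‖T a‖ ^ 2 ≤ ∑ i, ‖T (D i a)‖ ^ 2 := by
  have triv : ∀ d ≤ k, ∀ a ∈ V d, (∀ p ∈ V k, ⟪T a, T p⟫ = 0) →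
      lam (k + 1) * ‖T a‖ ^ 2 ≤ ∑ i, ‖T (D i a)‖ ^ 2 := by
    intro d hd a ha h0
    have : T a = 0 := inner_self_eq_zero.1 (h0 a (hV hd ha))
    rw [this]
    simp only [norm_zero]
    have : 0 ≤ ∑ i, ‖T (D i a)‖ ^ 2 := by positivity
    simpa using this
  induction d with
  | zero => exact triv 0 (Nat.zero_le _)
  | succ d ih =>
    intro a ha h0
    rcases le_or_gt (d + 1) k with hk | hk
    · exact triv _ hk a ha h0
    have hkd : k ≤ d := by omega
    obtain ⟨b, hb, hbo⟩ := exists_orthogonal_approx (V d) T (T a)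
    obtain ⟨c, rfl⟩ : ∃ c, a = b + c := ⟨a - b, by abel⟩
    have hc : c ∈ V (d + 1) := by
      have := (V (d + 1)).sub_mem ha (hV d.le_succ hb)
      simpa using this
    have hco : ∀ p ∈ V d, ⟪T c, T p⟫ = 0 := fun p hp => by simpa using hbo p hp
    have hb0 : ∀ p ∈ V k, ⟪T b, T p⟫ = 0 := fun p hp => by
      have h1 := h0 p hp
      rw [map_add, inner_add_left, hco p (hV hkd hp), add_zero] at h1
      exact h1
    have hB := ih b hb hb0
    have hbc : ⟪T b, T c⟫ = 0 := by rw [real_inner_comm]; exact hco b hb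
    have hcross : ∑ i, ⟪T (D i b), T (D i c)⟫ = 0 := by
      rw [skew_energy_cross hskew, ← map_sum, real_inner_comm, hco _
        (Submodule.sum_mem _ fun i _ => hD i _ _ (hD i _ _ hb)), neg_zero]
    obtain ⟨q, hq, hqe⟩ := heig d c hc
    have hC : ∑ i, ‖T (D i c)‖ ^ 2 = lam (d + 1) * ‖T c‖ ^ 2 := by
      simp only [← real_inner_self_eq_norm_sq]
      rw [skew_energy_cross hskew, hqe, inner_add_left, inner_neg_left, inner_smul_left,
        real_inner_comm (T c) (T q), hco q hq]
      simp
    have hS : ∑ i, ‖T (D i (b + c))‖ ^ 2 = ∑ i, ‖T (D i b)‖ ^ 2 + ∑ i, ‖T (D i c)‖ ^ 2 := by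
      simp only [map_add, norm_add_sq_real, Finset.sum_add_distrib, ← Finset.mul_sum, hcross]
      ring
    have hl : lam (k + 1) * ‖T c‖ ^ 2 ≤ lam (d + 1) * ‖T c‖ ^ 2 :=
      mul_le_mul_of_nonneg_right (hlam (by omega)) (by positivity)
    rw [hS, hC, map_add, norm_add_sq_real, hbc]
    linarith

/-- The inequality of `filtered_spectral_gap` for a vector `g` with weak derivatives `h i`, when the
image of the filtration is dense. -/
lemma weak_spectral_gap [∀ d, FiniteDimensional ℝ (V d)] (hV : Monotone V) (hlam : Monotone lam)
    (hD : ∀ i d, ∀ p ∈ V d, D i p ∈ V d)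
    (hskew : ∀ i p q, ⟪T (D i p), T q⟫ = -⟪T p, T (D i q)⟫)
    (heig : ∀ d, ∀ p ∈ V (d + 1), ∃ q ∈ V d,
      ∑ i, T (D i (D i p)) = -(lam (d + 1) • T p) + T q)
    (k : ℕ) (hk : 0 ≤ lam (k + 1)) {g : H} {h : ι → H}
    (hdense : ∀ ε > 0, ∃ d, ∃ p ∈ V d, ‖g - T p‖ < ε)
    (hgh : ∀ i p, ⟪h i, T p⟫ = -⟪g, T (D i p)⟫)
    (hg : ∀ p ∈ V k, ⟪g, T p⟫ = 0) :
    lam (k + 1) * ‖g‖ ^ 2 ≤ ∑ i, ‖h i‖ ^ 2 := by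
  have key : ∀ ε > 0, lam (k + 1) * ‖g‖ ^ 2 ≤ ∑ i, ‖h i‖ ^ 2 + lam (k + 1) * ε ^ 2 := by
    intro ε hε
    obtain ⟨d₀, p₀, hp₀, hlt⟩ := hdense ε hε
    set d := max d₀ k
    have hp : p₀ ∈ V d := hV (le_max_left _ _) hp₀
    obtain ⟨a, ha, hao⟩ := exists_orthogonal_approx (V d) T g
    have hdist : ‖g - T a‖ ^ 2 ≤ ε ^ 2 := by
      have e : g - T p₀ = (g - T a) + T (a - p₀) := by rw [map_sub]; abel
      have h1 : ‖g - T p₀‖ ^ 2 = ‖g - T a‖ ^ 2 + ‖T (a - p₀)‖ ^ 2 := by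
        rw [e, norm_add_sq_real, hao _ ((V d).sub_mem ha hp)]; ring
      have h2 : ‖g - T p₀‖ ^ 2 ≤ ε ^ 2 := by gcongr
      nlinarith [sq_nonneg ‖T (a - p₀)‖]
    have hpyth : ‖g‖ ^ 2 = ‖g - T a‖ ^ 2 + ‖T a‖ ^ 2 := by
      conv_lhs => rw [← sub_add_cancel g (T a)]
      rw [norm_add_sq_real, hao a ha]; ring
    have hgap := filtered_spectral_gap hV hlam hD hskew heig k d a ha (fun p hpk => by
      have h1 := hao p (hV (le_max_right _ _) hpk)
      rw [inner_sub_left, hg p hpk] at h1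
      linarith)
    have hproj : ∀ i, ‖T (D i a)‖ ^ 2 ≤ ‖h i‖ ^ 2 := by
      intro i
      have h1 : ⟪h i - T (D i a), T (D i a)⟫ = 0 := by
        have h2 := hao _ (hD i d _ (hD i d a ha))
        rw [inner_sub_left] at h2 ⊢
        rw [hgh, hskew i a]
        linarith
      have h2 : ‖h i‖ ^ 2 = ‖h i - T (D i a)‖ ^ 2 + ‖T (D i a)‖ ^ 2 := by
        conv_lhs => rw [← sub_add_cancel (h i) (T (D i a))]
        rw [norm_add_sq_real, h1]; ring
      nlinarith [sq_nonneg ‖h i - T (D i a)‖]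
    have hsum := Finset.sum_le_sum fun i (_ : i ∈ Finset.univ) => hproj i
    have := mul_le_mul_of_nonneg_left hdist hk
    rw [hpyth, mul_add]
    linarith
  have hlim : Tendsto (fun ε : ℝ => ∑ i, ‖h i‖ ^ 2 + lam (k + 1) * ε ^ 2) (nhdsWithin 0 (Set.Ioi 0))
      (nhds (∑ i, ‖h i‖ ^ 2 + lam (k + 1) * 0 ^ 2)) :=
    ((Continuous.tendsto (by fun_prop) 0).mono_left nhdsWithin_le_nhds)
  have := ge_of_tendsto hlim (eventually_nhdsWithin_of_forall fun ε hε => key ε hε)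
  simpa using this
end Abstract

section Polynomial

open MvPolynomial
variable {σ : Type*}

/-- The rotational vector field `x_i ∂_j - x_j ∂_i` on polynomials. -/
def rotPoly (i j : σ) : Derivation ℝ (MvPolynomial σ ℝ) (MvPolynomial σ ℝ) :=
  X (R := ℝ) i • pderiv j - X (R := ℝ) j • pderiv i

lemma rotPoly_apply (i j : σ) (p : MvPolynomial σ ℝ) :
    rotPoly i j p = X i * pderiv j p - X j * pderiv i p := rfl

lemma restrictTotalDegree_mono : Monotone (restrictTotalDegree σ ℝ) := fun _ _ h p hp => by
  rw [mem_restrictTotalDegree] at hp ⊢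
  exact hp.trans h

lemma mem_restrictTotalDegree_of_isHomogeneous {p : MvPolynomial σ ℝ} {m d : ℕ}
    (hp : p.IsHomogeneous m) (h : m ≤ d) : p ∈ restrictTotalDegree σ ℝ d := by
  rw [mem_restrictTotalDegree]
  exact hp.totalDegree_le.trans h

/-- Polynomials of degree at most `d` are sums of homogeneous ones. -/
lemma restrictTotalDegree_induction {d : ℕ} {P : MvPolynomial σ ℝ → Prop}
    (hhom : ∀ m ≤ d, ∀ p : MvPolynomial σ ℝ, p.IsHomogeneous m → P p)
    (hadd : ∀ p q, P p → P q → P (p + q)) {p : MvPolynomial σ ℝ}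
    (hp : p ∈ restrictTotalDegree σ ℝ d) : P p := by
  rw [mem_restrictTotalDegree] at hp
  rw [← sum_homogeneousComponent p]
  refine Finset.sum_induction_nonempty _ P hadd ⟨0, by simp⟩ fun m hm => ?_
  exact hhom m (by have := Finset.mem_range.1 hm; omega) _ (homogeneousComponent_isHomogeneous m p)

lemma rotPoly_isHomogeneous {p : MvPolynomial σ ℝ} {m : ℕ} (hp : p.IsHomogeneous m) (i j : σ) :
    (rotPoly i j p).IsHomogeneous m := by
  rcases Nat.eq_zero_or_pos m with rfl | hm
  · have : p.totalDegree = 0 := (totalDegree_zero_iff_isHomogeneous _).2 hp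
    rw [totalDegree_eq_zero_iff_eq_C] at this
    rw [rotPoly_apply, this]
    simp [isHomogeneous_zero]
  · have h : 1 + (m - 1) = m := by omega
    rw [rotPoly_apply]
    refine IsHomogeneous.sub ?_ ?_
    · simpa [h] using (isHomogeneous_X ℝ i).mul (hp.pderiv (i := j))
    · simpa [h] using (isHomogeneous_X ℝ j).mul (hp.pderiv (i := i))

lemma rotPoly_mem_restrictTotalDegree (i j : σ) {p : MvPolynomial σ ℝ} {d : ℕ}
    (hp : p ∈ restrictTotalDegree σ ℝ d) : rotPoly i j p ∈ restrictTotalDegree σ ℝ d := by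
  refine restrictTotalDegree_induction (P := fun p => rotPoly i j p ∈ restrictTotalDegree σ ℝ d)
    (fun m hm p hp => ?_) (fun p q hp hq => ?_) hp
  · exact mem_restrictTotalDegree_of_isHomogeneous (rotPoly_isHomogeneous hp i j) hm
  · rw [map_add]; exact Submodule.add_mem _ hp hq

lemma rotPoly_rotPoly [DecidableEq σ] (i j : σ) (p : MvPolynomial σ ℝ) :
    rotPoly i j (rotPoly i j p) =
      (X i * X i * pderiv j (pderiv j p) + X j * X j * pderiv i (pderiv i p))
      - (X i * (X j * pderiv j (pderiv i p)) + X j * (X i * pderiv i (pderiv j p)))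
      - (X i * pderiv i p + X j * pderiv j p)
      + (if i = j then 2 * (X i * pderiv i p) else 0) := by
  by_cases h : i = j
  · subst h
    simp only [rotPoly_apply, if_true]
    simp
    ring
  · simp only [rotPoly_apply, if_neg h, map_sub, Derivation.leibniz, smul_eq_mul, pderiv_X_self,
      pderiv_X_of_ne h, pderiv_X_of_ne (Ne.symm h)]
    ring

variable [Fintype σ]

/-- The Laplacian on polynomials. -/
def lapPoly (p : MvPolynomial σ ℝ) : MvPolynomial σ ℝ := ∑ i, pderiv i (pderiv i p)

lemma sum_X_X_pderiv_pderiv_of_isHomogeneous {p : MvPolynomial σ ℝ} {m : ℕ}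
    (hp : p.IsHomogeneous m) :
    ∑ i, ∑ j, X i * (X j * pderiv j (pderiv i p)) = C ((m : ℝ) * (m - 1)) * p := by
  have h : ∀ i, ∑ j, X i * (X j * pderiv j (pderiv i p)) =
      C ((m : ℝ) - 1) * (X i * pderiv i p) := by
    intro i
    rw [← Finset.mul_sum, (hp.pderiv (i := i)).sum_X_mul_pderiv]
    rcases Nat.eq_zero_or_pos m with rfl | hm
    · have : p.totalDegree = 0 := (totalDegree_zero_iff_isHomogeneous _).2 hp
      rw [totalDegree_eq_zero_iff_eq_C] at this
      rw [this]; simp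
    · rw [nsmul_eq_mul, Nat.cast_sub hm]
      simp; ring
  rw [Finset.sum_congr rfl fun i _ => h i, ← Finset.mul_sum, hp.sum_X_mul_pderiv, nsmul_eq_mul]
  simp; ring

lemma sum_rotPoly_rotPoly_of_isHomogeneous {p : MvPolynomial σ ℝ} {m : ℕ} (hp : p.IsHomogeneous m) :
    ∑ i, ∑ j, rotPoly i j (rotPoly i j p) =
      2 * ((∑ i, X i ^ 2) * lapPoly p) - C (2 * (m * (m + Fintype.card σ - 2) : ℝ)) * p := by
  classical
  have hE := hp.sum_X_mul_pderiv
  have hδ : ∑ i, 2 * (X i * pderiv i p) = 2 * (m • p) := by rw [← Finset.mul_sum, hE]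
  have hE2 := sum_X_X_pderiv_pderiv_of_isHomogeneous hp
  have hE2' : ∑ i, ∑ j, X j * (X i * pderiv i (pderiv j p)) = C ((m : ℝ) * (m - 1)) * p := by
    rw [Finset.sum_comm]; exact hE2
  have h1 : ∑ i, ∑ j, X i * X i * pderiv j (pderiv j p) = (∑ i, X i ^ 2) * lapPoly p := by
    simp only [lapPoly, Finset.sum_mul_sum, pow_two]
  have h1' : ∑ i, ∑ j, X j * X j * pderiv i (pderiv i p) = (∑ i, X i ^ 2) * lapPoly p := by
    rw [Finset.sum_comm]; exact h1
  simp only [rotPoly_rotPoly, Finset.sum_add_distrib, Finset.sum_sub_distrib, h1, h1', hE2, hE2',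
    Finset.sum_ite_eq, Finset.mem_univ, if_true, Finset.sum_const, Finset.card_univ, hE, hδ,
    ← Finset.smul_sum]
  simp only [nsmul_eq_mul, map_mul, map_sub, map_add, map_natCast, map_one, map_ofNat]
  ring

lemma lapPoly_mem {p : MvPolynomial σ ℝ} {m d : ℕ} (hp : p.IsHomogeneous m) (h : m ≤ d + 1) :
    lapPoly p ∈ restrictTotalDegree σ ℝ d :=
  Submodule.sum_mem _ fun i _ => mem_restrictTotalDegree_of_isHomogeneous
    ((hp.pderiv (i := i)).pderiv (i := i)) (by omega)

/-- Modulo lower degree, the Casimir operator acts on restrictions to the sphere of polynomials of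
degree `d + 1` as a scalar. -/
lemma exists_sum_rotPoly_rotPoly {A : Type*} [AddCommGroup A] [Module ℝ A]
    (T : MvPolynomial σ ℝ →ₗ[ℝ] A) (hT : ∀ q, T ((∑ i, X i ^ 2) * q) = T q) (d : ℕ)
    {p : MvPolynomial σ ℝ} (hp : p ∈ restrictTotalDegree σ ℝ (d + 1)) :
    ∃ q ∈ restrictTotalDegree σ ℝ d, ∑ i, ∑ j, T (rotPoly i j (rotPoly i j p)) =
      -((2 * (((d + 1 : ℕ) : ℝ) * ((d + 1 : ℕ) + Fintype.card σ - 2))) • T p) + T q := by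
  refine restrictTotalDegree_induction (P := fun p => ∃ q ∈ restrictTotalDegree σ ℝ d,
    ∑ i, ∑ j, T (rotPoly i j (rotPoly i j p)) =
      -((2 * (((d + 1 : ℕ) : ℝ) * ((d + 1 : ℕ) + Fintype.card σ - 2))) • T p) + T q)
    (fun m hm p hp => ?_) ?_ hp
  · have hsum : ∑ i, ∑ j, T (rotPoly i j (rotPoly i j p)) = (2 : ℝ) • T (lapPoly p) -
        (2 * (m * (m + Fintype.card σ - 2) : ℝ)) • T p := by
      simp only [← map_sum, sum_rotPoly_rotPoly_of_isHomogeneous hp]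
      rw [map_sub, ← smul_eq_C_mul, map_smul, ← hT (lapPoly p), two_mul, map_add,
        two_smul]
    have hl := Submodule.smul_mem _ (2 : ℝ) (lapPoly_mem hp hm)
    rcases hm.lt_or_eq with hlt | rfl
    · have hp' := mem_restrictTotalDegree_of_isHomogeneous hp (Nat.le_of_lt_succ hlt)
      refine ⟨(2 : ℝ) • lapPoly p - (2 * (m * (m + Fintype.card σ - 2) : ℝ)) • p
        + (2 * (((d + 1 : ℕ) : ℝ) * ((d + 1 : ℕ) + Fintype.card σ - 2))) • p,
        Submodule.add_mem _ (Submodule.sub_mem _ hl (Submodule.smul_mem _ _ hp'))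
          (Submodule.smul_mem _ _ hp'), ?_⟩
      rw [hsum]
      simp only [map_add, map_sub, map_smul]
      abel
    · exact ⟨_, hl, by rw [hsum, map_smul]; abel⟩
  · rintro p q ⟨a, ha, hpa⟩ ⟨b, hb, hqb⟩
    refine ⟨a + b, Submodule.add_mem _ ha hb, ?_⟩
    simp only [map_add, Finset.sum_add_distrib, hpa, hqb, smul_add]
    abel

end Polynomial

section Sphere

/-- The infinitesimal rotation `x ↦ x_i e_j - x_j e_i`. -/
def rotGen (i j : Fin n) : E n →L[ℝ] E n :=
  (EuclideanSpace.proj i).smulRight (EuclideanSpace.single j (1 : ℝ)) -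
    (EuclideanSpace.proj j).smulRight (EuclideanSpace.single i (1 : ℝ))

lemma rotGen_apply (i j : Fin n) (x : E n) :
    rotGen i j x = x i • EuclideanSpace.single j (1 : ℝ) - x j • EuclideanSpace.single i (1 : ℝ) :=
  rfl

/-- The derivative `x_i ∂_j g - x_j ∂_i g` along an infinitesimal rotation. -/
def rotDeriv (i j : Fin n) (g : E n → ℝ) (x : E n) : ℝ := fderiv ℝ g x (rotGen i j x)

lemma rotDeriv_apply (i j : Fin n) (g : E n → ℝ) (x : E n) :
    rotDeriv i j g x = x i * fderiv ℝ g x (EuclideanSpace.single j 1) -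
      x j * fderiv ℝ g x (EuclideanSpace.single i 1) := by
  simp [rotDeriv, rotGen_apply]

lemma rotDeriv_mul {g h : E n → ℝ} {x : E n} (hg : DifferentiableAt ℝ g x)
    (hh : DifferentiableAt ℝ h x) (i j : Fin n) :
    rotDeriv i j (fun y => g y * h y) x = rotDeriv i j g x * h x + g x * rotDeriv i j h x := by
  simp only [rotDeriv, fderiv_fun_mul hg hh]
  simp
  ring

lemma contDiffOn_rotDeriv {g : E n → ℝ} {U : Set (E n)} (hU : IsOpen U) {m k : WithTop ℕ∞}
    (hg : ContDiffOn ℝ k g U) (hmk : m + 1 ≤ k) (i j : Fin n) :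
    ContDiffOn ℝ m (rotDeriv i j g) U :=
  (hg.fderiv_of_isOpen hU hmk).clm_apply (rotGen i j).contDiff.contDiffOn

/-- The flow of `rotGen i j`: rotation by the angle `t` in the plane of the `i`-th and `j`-th
coordinates. -/
def rotFlow (i j : Fin n) (t : ℝ) (x : E n) : E n :=
  x + (((Real.cos t - 1) * x i - Real.sin t * x j) • EuclideanSpace.single i (1 : ℝ) +
    (Real.sin t * x i + (Real.cos t - 1) * x j) • EuclideanSpace.single j (1 : ℝ))

lemma rotFlow_zero (i j : Fin n) (x : E n) : rotFlow i j 0 x = x := by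
  simp [rotFlow]

lemma norm_rotFlow {i j : Fin n} (hij : i ≠ j) (t : ℝ) (x : E n) : ‖rotFlow i j t x‖ = ‖x‖ := by
  have h : ‖rotFlow i j t x‖ ^ 2 = ‖x‖ ^ 2 := by
    rw [rotFlow, norm_add_sq_real, norm_add_sq_real, inner_add_right]
    simp only [inner_smul_right, inner_smul_left, norm_smul, EuclideanSpace.inner_single_right,
      PiLp.norm_single, PiLp.single_apply, mul_pow, Real.norm_eq_abs, sq_abs]
    simp [hij.symm]
    linear_combination (x i ^ 2 + x j ^ 2) * Real.sin_sq_add_cos_sq t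
  exact (sq_eq_sq₀ (norm_nonneg _) (norm_nonneg _)).1 h

lemma hasDerivAt_rotFlow {i j : Fin n} (hij : i ≠ j) (t : ℝ) (x : E n) :
    HasDerivAt (fun s => rotFlow i j s x) (rotGen i j (rotFlow i j t x)) t := by
  have h1 : HasDerivAt (fun s => (Real.cos s - 1) * x i - Real.sin s * x j)
      (-Real.sin t * x i - Real.cos t * x j) t :=
    (((Real.hasDerivAt_cos t).sub_const 1).mul_const _).sub ((Real.hasDerivAt_sin t).mul_const _)
  have h2 : HasDerivAt (fun s => Real.sin s * x i + (Real.cos s - 1) * x j)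
      (Real.cos t * x i + -Real.sin t * x j) t :=
    ((Real.hasDerivAt_sin t).mul_const _).add (((Real.hasDerivAt_cos t).sub_const 1).mul_const _)
  have h := ((h1.smul_const (EuclideanSpace.single i (1 : ℝ))).add
    (h2.smul_const (EuclideanSpace.single j (1 : ℝ)))).const_add x
  have ei : rotFlow i j t x i = Real.cos t * x i - Real.sin t * x j := by
    simp [rotFlow, hij]; ring
  have ej : rotFlow i j t x j = Real.sin t * x i + Real.cos t * x j := by
    simp [rotFlow, hij.symm]; ring
  have e : rotGen i j (rotFlow i j t x) =
      (-Real.sin t * x i - Real.cos t * x j) • EuclideanSpace.single i (1 : ℝ) +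
        (Real.cos t * x i + -Real.sin t * x j) • EuclideanSpace.single j (1 : ℝ) := by
    rw [rotGen_apply, ei, ej]
    module
  rw [e]
  exact h

/-- `rotFlow i j t` as a linear isometry. -/
def rotFlowIsometry {i j : Fin n} (hij : i ≠ j) (t : ℝ) : E n →ₗᵢ[ℝ] E n where
  toFun := rotFlow i j t
  map_add' x y := by simp only [rotFlow, PiLp.add_apply]; module
  map_smul' c x := by
    simp only [rotFlow, PiLp.smul_apply, smul_eq_mul, RingHom.id_apply]; module
  norm_map' := norm_rotFlow hij t

/-- The map induced on the unit sphere by a linear isometry. -/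
def sphereMap (L : E n →ₗᵢ[ℝ] E n) (θ : sphere (0 : E n) 1) : sphere (0 : E n) 1 :=
  ⟨L θ, by simp⟩

lemma continuous_sphereMap (L : E n →ₗᵢ[ℝ] E n) : Continuous (sphereMap L) :=
  (L.continuous.comp continuous_subtype_val).subtype_mk _

open scoped Pointwise in
lemma measurePreserving_sphereMap (L : E n →ₗᵢ[ℝ] E n) :
    MeasurePreserving (sphereMap L) (volume : Measure (E n)).toSphere
      (volume : Measure (E n)).toSphere := by
  refine ⟨(continuous_sphereMap L).measurable, Measure.ext fun s hs => ?_⟩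
  let L' := L.toLinearIsometryEquiv rfl
  have hpre : L' ⁻¹' (Set.Ioo (0 : ℝ) 1 • (Subtype.val '' s)) =
      Set.Ioo (0 : ℝ) 1 • (Subtype.val '' (sphereMap L ⁻¹' s)) := by
    ext x
    simp only [Set.mem_preimage, Set.mem_smul, Set.mem_image]
    constructor
    · rintro ⟨r, hr, _, ⟨y, hy, rfl⟩, hxy⟩
      refine ⟨r, hr, L'.symm y, ⟨⟨L'.symm y, by simp⟩, ?_, rfl⟩, ?_⟩
      · have : sphereMap L ⟨L'.symm y, by simp⟩ = y :=
          Subtype.ext (by change L' (L'.symm y) = y; simp)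
        rw [this]; exact hy
      · rw [← map_smul, hxy, L'.symm_apply_apply]
    · rintro ⟨r, hr, _, ⟨y, hy, rfl⟩, rfl⟩
      exact ⟨r, hr, _, ⟨_, hy, rfl⟩, by rw [map_smul]; rfl⟩
  rw [Measure.map_apply (continuous_sphereMap L).measurable hs, Measure.toSphere_apply' _ hs,
    Measure.toSphere_apply' _ ((continuous_sphereMap L).measurable hs), ← hpre,
    L'.measurePreserving.measure_preimage_emb L'.toHomeomorph.measurableEmbedding]

lemma integrable_sphere {F : sphere (0 : E n) 1 → ℝ} (hF : Continuous F) :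
    Integrable F (volume : Measure (E n)).toSphere :=
  hF.integrable_of_hasCompactSupport (HasCompactSupport.of_compactSpace F)

lemma continuous_sphere_restrict {g : E n → ℝ} {U : Set (E n)} (hUS : sphere (0 : E n) 1 ⊆ U)
    (hg : ContinuousOn g U) : Continuous fun θ : sphere (0 : E n) 1 => g θ :=
  hg.comp_continuous continuous_subtype_val fun θ => hUS θ.2

lemma integral_rotDeriv {U : Set (E n)} (hU : IsOpen U) (hUS : sphere (0 : E n) 1 ⊆ U)
    {g : E n → ℝ} (hg : ContDiffOn ℝ 1 g U) (i j : Fin n) :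
    ∫ θ : sphere (0 : E n) 1, rotDeriv i j g θ ∂(volume : Measure (E n)).toSphere = 0 := by
  rcases eq_or_ne i j with rfl | hij
  · simp [rotDeriv_apply]
  have hgc := continuous_sphere_restrict hUS hg.continuousOn
  have hdc := continuous_sphere_restrict hUS
    (contDiffOn_rotDeriv hU (m := 0) hg (by norm_num) i j).continuousOn
  obtain ⟨C, hC⟩ : ∃ C, ∀ θ : sphere (0 : E n) 1, ‖rotDeriv i j g θ‖ ≤ C := by
    obtain ⟨C, hC⟩ := isCompact_univ.exists_bound_of_continuousOn hdc.continuousOn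
    exact ⟨C, fun θ => hC θ (Set.mem_univ θ)⟩
  set φ : ℝ → sphere (0 : E n) 1 → sphere (0 : E n) 1 := fun t => sphereMap (rotFlowIsometry hij t)
  have hφ : ∀ t, Continuous (φ t) := fun t => continuous_sphereMap _
  have h := hasDerivAt_integral_of_dominated_loc_of_deriv_le
    (μ := (volume : Measure (E n)).toSphere)
    (F := fun t (θ : sphere (0 : E n) 1) => g (φ t θ)) (F' := fun t θ => rotDeriv i j g (φ t θ))
    (x₀ := 0) (s := Set.univ) (bound := fun _ => C) Filter.univ_mem
    (Eventually.of_forall fun t => (hgc.comp (hφ t)).aestronglyMeasurable)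
    (integrable_sphere (hgc.comp (hφ 0))) (hdc.comp (hφ 0)).aestronglyMeasurable
    (Eventually.of_forall fun θ t _ => hC _) (integrable_const C)
    (Eventually.of_forall fun θ t _ => by
      have hd : DifferentiableAt ℝ g (φ t θ) :=
        (hg.contDiffAt (hU.mem_nhds (hUS (φ t θ).2))).differentiableAt (by norm_num)
      exact hd.hasFDerivAt.comp_hasDerivAt t (hasDerivAt_rotFlow hij t θ))
  have hconst : ∀ t, ∫ θ, g (φ t θ) ∂(volume : Measure (E n)).toSphere =
      ∫ θ : sphere (0 : E n) 1, g θ ∂(volume : Measure (E n)).toSphere := fun t => by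
    conv_rhs => rw [← (measurePreserving_sphereMap (rotFlowIsometry hij t)).map_eq]
    rw [integral_map (hφ t).aemeasurable hgc.aestronglyMeasurable]
  have h0 : ∀ θ, φ 0 θ = θ := fun θ => Subtype.ext (rotFlow_zero i j θ)
  have h2 := h.2
  simp only [hconst, h0] at h2
  exact h2.unique (hasDerivAt_const _ _)

lemma integral_rotDeriv_mul {U : Set (E n)} (hU : IsOpen U) (hUS : sphere (0 : E n) 1 ⊆ U)
    {g h : E n → ℝ} (hg : ContDiffOn ℝ 1 g U) (hh : ContDiffOn ℝ 1 h U) (i j : Fin n) :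
    ∫ θ : sphere (0 : E n) 1, rotDeriv i j g θ * h θ ∂(volume : Measure (E n)).toSphere =
      -∫ θ : sphere (0 : E n) 1, g θ * rotDeriv i j h θ ∂(volume : Measure (E n)).toSphere := by
  have hd : ∀ {u : E n → ℝ}, ContDiffOn ℝ 1 u U → ∀ θ : sphere (0 : E n) 1,
      DifferentiableAt ℝ u θ := fun hu θ =>
    (hu.contDiffAt (hU.mem_nhds (hUS θ.2))).differentiableAt (by norm_num)
  have hc : ∀ {u : E n → ℝ}, ContDiffOn ℝ 1 u U →
      Continuous fun θ : sphere (0 : E n) 1 => rotDeriv i j u θ := fun hu =>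
    continuous_sphere_restrict hUS
      (contDiffOn_rotDeriv hU (m := 0) hu (by norm_num) i j).continuousOn
  have hgc := continuous_sphere_restrict hUS hg.continuousOn
  have hhc := continuous_sphere_restrict hUS hh.continuousOn
  have h := integral_rotDeriv hU hUS (hg.mul hh) i j
  rw [integral_congr_ae (Eventually.of_forall fun θ : sphere (0 : E n) 1 =>
    rotDeriv_mul (hd hg θ) (hd hh θ) i j)] at h
  have hadd := integral_add (integrable_sphere ((hc hg).mul hhc))
    (integrable_sphere (hgc.mul (hc hh)))
  simp only [Pi.mul_apply] at hadd
  rw [hadd] at h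
  linarith

/-- Evaluation of a polynomial as a function on `ℝⁿ`. -/
def polyFun (p : MvPolynomial (Fin n) ℝ) (x : E n) : ℝ := MvPolynomial.eval (fun i => x i) p

lemma polyFun_C (a : ℝ) : polyFun (n := n) (MvPolynomial.C a) = fun _ => a := by
  ext; simp [polyFun]

lemma polyFun_add (p q : MvPolynomial (Fin n) ℝ) : polyFun (p + q) = polyFun p + polyFun q := by
  ext; simp [polyFun]

lemma polyFun_mul_X (p : MvPolynomial (Fin n) ℝ) (i : Fin n) :
    polyFun (p * MvPolynomial.X i) = fun x => polyFun p x * x i := by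
  ext; simp [polyFun]

lemma contDiff_polyFun (p : MvPolynomial (Fin n) ℝ) {k : WithTop ℕ∞} :
    ContDiff ℝ k (polyFun p) := by
  induction p using MvPolynomial.induction_on with
  | C a => rw [polyFun_C]; exact contDiff_const
  | add p q hp hq => rw [polyFun_add]; exact hp.add hq
  | mul_X p i hp =>
    rw [polyFun_mul_X]
    exact hp.mul (EuclideanSpace.proj i : E n →L[ℝ] ℝ).contDiff

lemma differentiable_polyFun (p : MvPolynomial (Fin n) ℝ) : Differentiable ℝ (polyFun p) :=
  (contDiff_polyFun p (k := 1)).differentiable (by norm_num)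

lemma rotDeriv_polyFun (i j : Fin n) (p : MvPolynomial (Fin n) ℝ) (x : E n) :
    rotDeriv i j (polyFun p) x = polyFun (rotPoly i j p) x := by
  induction p using MvPolynomial.induction_on with
  | C a =>
    rw [rotDeriv, polyFun_C]
    simp [polyFun]
  | add p q hp hq =>
    rw [rotDeriv, polyFun_add, fderiv_add (differentiable_polyFun p x) (differentiable_polyFun q x)]
    rw [rotDeriv] at hp hq
    simp [hp, hq, polyFun]
  | mul_X p k hp =>
    have hX : HasFDerivAt (fun y : E n => y k) (EuclideanSpace.proj k : E n →L[ℝ] ℝ) x :=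
      (EuclideanSpace.proj k : E n →L[ℝ] ℝ).hasFDerivAt
    rw [polyFun_mul_X, rotDeriv_mul (differentiable_polyFun p x) hX.differentiableAt, hp, rotDeriv,
      hX.fderiv, Derivation.leibniz]
    simp only [rotPoly_apply, rotGen_apply, MvPolynomial.pderiv_X, Pi.single_apply, polyFun]
    split_ifs <;> subst_vars <;> simp [*] <;> ring

/-- Restriction of polynomials to the unit sphere. -/
def spherePoly : MvPolynomial (Fin n) ℝ →ₐ[ℝ] C(sphere (0 : E n) 1, ℝ) :=
  MvPolynomial.aeval fun i => ⟨fun θ => (θ : E n) i, by fun_prop⟩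

lemma spherePoly_apply (p : MvPolynomial (Fin n) ℝ) (θ : sphere (0 : E n) 1) :
    spherePoly p θ = polyFun p θ := by
  induction p using MvPolynomial.induction_on with
  | C a => simp [spherePoly, polyFun]
  | add p q hp hq => rw [map_add, ContinuousMap.add_apply, hp, hq]; simp [polyFun]
  | mul_X p i hp => rw [map_mul, ContinuousMap.mul_apply, hp]; simp [spherePoly, polyFun]

lemma spherePoly_range_dense : (spherePoly (n := n)).range.topologicalClosure = ⊤ := by
  refine ContinuousMap.subalgebra_topologicalClosure_eq_top_of_separatesPoints _ fun x y hxy => ?_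
  have : ∃ i, (x : E n) i ≠ (y : E n) i := by
    by_contra! h
    exact hxy (Subtype.ext (PiLp.ext h))
  obtain ⟨i, hi⟩ := this
  refine ⟨_, ⟨spherePoly (MvPolynomial.X i), ⟨_, rfl⟩, rfl⟩, ?_⟩
  simpa [spherePoly] using hi

/-- Restriction of polynomials to the unit sphere, as elements of `L²`. -/
def polyL2 (n : ℕ) :
    MvPolynomial (Fin n) ℝ →ₗ[ℝ] Lp ℝ 2 (volume : Measure (E n)).toSphere :=
  (ContinuousMap.toLp 2 (volume : Measure (E n)).toSphere ℝ).toLinearMap ∘ₗ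
    spherePoly.toLinearMap

lemma polyL2_apply (p : MvPolynomial (Fin n) ℝ) :
    polyL2 n p = ContinuousMap.toLp 2 (volume : Measure (E n)).toSphere ℝ (spherePoly p) := rfl

lemma inner_toLp_sphere (F G : C(sphere (0 : E n) 1, ℝ)) :
    ⟪ContinuousMap.toLp 2 (volume : Measure (E n)).toSphere ℝ F,
      ContinuousMap.toLp 2 (volume : Measure (E n)).toSphere ℝ G⟫ =
      ∫ θ, F θ * G θ ∂(volume : Measure (E n)).toSphere := by
  rw [ContinuousMap.inner_toLp]
  simp [mul_comm]

lemma norm_toLp_sphere_sq (F : C(sphere (0 : E n) 1, ℝ)) :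
    ‖ContinuousMap.toLp 2 (volume : Measure (E n)).toSphere ℝ F‖ ^ 2 =
      ∫ θ, F θ ^ 2 ∂(volume : Measure (E n)).toSphere := by
  rw [← real_inner_self_eq_norm_sq, inner_toLp_sphere]
  simp [pow_two]

lemma exists_polyL2_approx (G : C(sphere (0 : E n) 1, ℝ)) {ε : ℝ} (hε : 0 < ε) :
    ∃ p, ‖ContinuousMap.toLp 2 (volume : Measure (E n)).toSphere ℝ G - polyL2 n p‖ < ε := by
  have hG : G ∈ closure ((spherePoly (n := n)).range : Set C(sphere (0 : E n) 1, ℝ)) := by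
    rw [← Subalgebra.topologicalClosure_coe, spherePoly_range_dense]
    exact Set.mem_univ G
  have hL := image_closure_subset_closure_image
    (ContinuousMap.toLp 2 (volume : Measure (E n)).toSphere ℝ).continuous
    (Set.mem_image_of_mem _ hG)
  obtain ⟨_, ⟨_, ⟨p, rfl⟩, rfl⟩, hp⟩ := Metric.mem_closure_iff.1 hL ε hε
  exact ⟨p, by rw [← dist_eq_norm]; exact hp⟩

lemma polyL2_sum_sq_mul (q : MvPolynomial (Fin n) ℝ) :
    polyL2 n ((∑ i, MvPolynomial.X i ^ 2) * q) = polyL2 n q := by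
  rw [polyL2_apply, polyL2_apply]
  congr 1
  ext θ
  have h : ∑ i, (θ : E n) i ^ 2 = 1 := by
    rw [← EuclideanSpace.real_norm_sq_eq, norm_eq_of_mem_sphere, one_pow]
  simp [spherePoly_apply, polyFun, h]

/-- Sharp Poincaré inequality on the sphere for functions orthogonal to all polynomials of degree
at most `k`. -/
lemma sphere_poincare (hn : 2 ≤ n) {U : Set (E n)} (hU : IsOpen U) (hUS : sphere (0 : E n) 1 ⊆ U)
    {g : E n → ℝ} (hg : ContDiffOn ℝ 1 g U) (k : ℕ)
    (horth : ∀ p ∈ MvPolynomial.restrictTotalDegree (Fin n) ℝ k,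
      ∫ θ : sphere (0 : E n) 1, g θ * polyFun p θ ∂(volume : Measure (E n)).toSphere = 0) :
    2 * (((k + 1 : ℕ) : ℝ) * ((k + 1 : ℕ) + n - 2)) *
      ∫ θ : sphere (0 : E n) 1, g θ ^ 2 ∂(volume : Measure (E n)).toSphere ≤
      ∑ i, ∑ j, ∫ θ : sphere (0 : E n) 1, rotDeriv i j g θ ^ 2
        ∂(volume : Measure (E n)).toSphere := by
  have hn' : (2 : ℝ) ≤ n := by exact_mod_cast hn
  let lam : ℕ → ℝ := fun d => 2 * ((d : ℝ) * (d + n - 2))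
  have hlam : Monotone lam := fun a b hab => by
    have h : (a : ℝ) ≤ b := by exact_mod_cast hab
    have h0 : (0 : ℝ) ≤ a := by positivity
    change 2 * ((a : ℝ) * (a + n - 2)) ≤ 2 * ((b : ℝ) * (b + n - 2))
    nlinarith [mul_le_mul h (show (a : ℝ) + n - 2 ≤ b + n - 2 by linarith) (by linarith)
      (by linarith)]
  let G : C(sphere (0 : E n) 1, ℝ) :=
    ⟨fun θ => g θ, continuous_sphere_restrict hUS hg.continuousOn⟩
  let R : Fin n × Fin n → C(sphere (0 : E n) 1, ℝ) := fun ij =>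
    ⟨fun θ => rotDeriv ij.1 ij.2 g θ, continuous_sphere_restrict hUS
      (contDiffOn_rotDeriv hU (m := 0) hg (by norm_num) ij.1 ij.2).continuousOn⟩
  have h := weak_spectral_gap (V := MvPolynomial.restrictTotalDegree (Fin n) ℝ) (T := polyL2 n)
    (D := fun ij : Fin n × Fin n => (rotPoly ij.1 ij.2).toLinearMap) (lam := lam)
    (g := ContinuousMap.toLp 2 (volume : Measure (E n)).toSphere ℝ G)
    (h := fun ij => ContinuousMap.toLp 2 (volume : Measure (E n)).toSphere ℝ (R ij))
    restrictTotalDegree_mono hlam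
    (fun ij d p hp => rotPoly_mem_restrictTotalDegree ij.1 ij.2 hp)
    (fun ij p q => by
      simp only [polyL2_apply, inner_toLp_sphere, spherePoly_apply]
      have := integral_rotDeriv_mul hU hUS (contDiff_polyFun p).contDiffOn
        (contDiff_polyFun q).contDiffOn ij.1 ij.2
      simp only [rotDeriv_polyFun] at this
      exact this)
    (fun d p hp => by
      obtain ⟨q, hq, h⟩ := exists_sum_rotPoly_rotPoly (polyL2 n) polyL2_sum_sq_mul d hp
      refine ⟨q, hq, ?_⟩
      rw [Fintype.sum_prod_type]
      simpa [lam] using h)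
    k (by
      have : (0 : ℝ) ≤ k := by positivity
      simp only [lam]
      push_cast
      exact mul_nonneg (by norm_num) (mul_nonneg (by linarith) (by linarith)))
    (fun ε hε => by
      obtain ⟨p, hp⟩ := exists_polyL2_approx G hε
      exact ⟨p.totalDegree, p, (MvPolynomial.mem_restrictTotalDegree _ _ _).2 le_rfl, hp⟩)
    (fun ij p => by
      simp only [polyL2_apply, inner_toLp_sphere, spherePoly_apply]
      have := integral_rotDeriv_mul hU hUS hg (contDiff_polyFun p).contDiffOn ij.1 ij.2
      simp only [rotDeriv_polyFun] at this
      exact this)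
    (fun p hp => by
      simp only [polyL2_apply, inner_toLp_sphere, spherePoly_apply]
      exact horth p hp)
  simp only [norm_toLp_sphere_sq] at h
  rw [Fintype.sum_prod_type] at h
  exact h

/-- Expansion of the squared norm of the antisymmetrization of `x ⊗ h + p ⊗ G`. -/
lemma sum_norm_antisymm_sq {V : Type*} [NormedAddCommGroup V] [InnerProductSpace ℝ V]
    (h p : Fin n → V) (x G : Fin n → ℝ) (hx : ∑ i, x i ^ 2 = 1) (hp : ∑ i, x i • p i = 0)
    (hpp : ∀ i j, ⟪p i, p j⟫ = (if i = j then 1 else 0) - x i * x j) :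
    ∑ i, ∑ j, ‖(x i • h j + G j • p i) - (x j • h i + G i • p j)‖ ^ 2 =
      2 * (∑ i, ‖h i - x i • (∑ j, x j • h j) - (∑ j, x j * G j) • p i‖ ^ 2 +
        (n - 2) * (∑ i, G i ^ 2 - (∑ j, x j * G j) ^ 2)) := by
  set y := ∑ j, x j • h j with hy
  set g := ∑ j, x j * G j with hg
  have hpn : ∑ i, ‖p i‖ ^ 2 = n - 1 := by
    simp only [← real_inner_self_eq_norm_sq, hpp, if_true, ← pow_two, Finset.sum_sub_distrib, hx]
    simp
  have hhy : ∑ i, x i * ⟪h i, y⟫ = ‖y‖ ^ 2 := by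
    have e : ⟪∑ j, x j • h j, y⟫ = ∑ i, x i * ⟪h i, y⟫ := by
      rw [sum_inner]
      exact Finset.sum_congr rfl fun i _ => real_inner_smul_left _ _ _
    rw [← e, ← hy, real_inner_self_eq_norm_sq]
  have hpy : ∑ i, x i * ⟪y, p i⟫ = 0 := by
    have : ⟪y, ∑ i, x i • p i⟫ = 0 := by rw [hp, inner_zero_right]
    simpa [inner_sum, inner_smul_right] using this
  have hS1 : ∑ i, ∑ j, ‖x i • h j + G j • p i‖ ^ 2 =
      ∑ i, ‖h i‖ ^ 2 + (n - 1) * ∑ i, G i ^ 2 := by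
    have e : ∀ i j, ‖x i • h j + G j • p i‖ ^ 2 =
        x i ^ 2 * ‖h j‖ ^ 2 + 2 * (x i * (G j * ⟪h j, p i⟫)) + ‖p i‖ ^ 2 * G j ^ 2 := by
      intro i j
      rw [norm_add_sq_real, inner_smul_left, inner_smul_right, norm_smul, norm_smul]
      simp only [mul_pow, Real.norm_eq_abs, sq_abs, conj_trivial]
      ring
    have hc : ∑ i, ∑ j, x i * (G j * ⟪h j, p i⟫) = 0 := by
      rw [Finset.sum_comm]
      refine Finset.sum_eq_zero fun j _ => ?_
      have : ⟪h j, ∑ i, x i • p i⟫ = 0 := by rw [hp, inner_zero_right]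
      simp only [inner_sum, inner_smul_right] at this
      rw [← mul_zero (G j), ← this, Finset.mul_sum]
      exact Finset.sum_congr rfl fun i _ => by ring
    have hc2 : ∑ i, ∑ j, 2 * (x i * (G j * ⟪h j, p i⟫)) = 0 := by
      have h2 : ∑ i, ∑ j, 2 * (x i * (G j * ⟪h j, p i⟫)) =
          2 * ∑ i, ∑ j, x i * (G j * ⟪h j, p i⟫) := by simp only [Finset.mul_sum]
      rw [h2, hc, mul_zero]
    simp only [e, Finset.sum_add_distrib, ← Finset.sum_mul_sum, hx, hpn, hc2]
    ring
  have hS2 : ∑ i, ∑ j, ⟪x i • h j + G j • p i, x j • h i + G i • p j⟫ =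
      ‖y‖ ^ 2 + 2 * (g * ∑ i, ⟪h i, p i⟫) + (∑ i, G i ^ 2 - g ^ 2) := by
    have e : ∀ i j, ⟪x i • h j + G j • p i, x j • h i + G i • p j⟫ =
        x i * (x j * ⟪h j, h i⟫) + (x i * G i) * ⟪h j, p j⟫ + ⟪h i, p i⟫ * (x j * G j) +
          (if i = j then G i * G j else 0) - (x i * G i) * (x j * G j) := by
      intro i j
      simp only [inner_add_left, inner_add_right, inner_smul_left, inner_smul_right, hpp,
        conj_trivial, real_inner_comm (h i) (p i)]
      split_ifs <;> ring
    have hY : ∑ i, ∑ j, x i * (x j * ⟪h j, h i⟫) = ‖y‖ ^ 2 := by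
      rw [← hhy]
      refine Finset.sum_congr rfl fun i _ => ?_
      rw [← Finset.mul_sum, hy, inner_sum]
      simp only [inner_smul_right, real_inner_comm]
    simp only [e, Finset.sum_add_distrib, Finset.sum_sub_distrib, hY, ← Finset.sum_mul_sum, ← hg,
      Finset.sum_ite_eq, Finset.mem_univ, if_true]
    simp only [pow_two]
    ring
  have hL : ∑ i, ∑ j, ‖(x i • h j + G j • p i) - (x j • h i + G i • p j)‖ ^ 2 =
      2 * ∑ i, ∑ j, ‖x i • h j + G j • p i‖ ^ 2 -
        2 * ∑ i, ∑ j, ⟪x i • h j + G j • p i, x j • h i + G i • p j⟫ := by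
    have hsw : ∑ i, ∑ j, ‖x j • h i + G i • p j‖ ^ 2 = ∑ i, ∑ j, ‖x i • h j + G j • p i‖ ^ 2 :=
      Finset.sum_comm
    simp only [norm_sub_sq_real, Finset.sum_add_distrib, Finset.sum_sub_distrib, hsw]
    simp only [← Finset.mul_sum]
    ring
  have hR : ∑ i, ‖h i - x i • y - g • p i‖ ^ 2 =
      ∑ i, ‖h i‖ ^ 2 - ‖y‖ ^ 2 + g ^ 2 * (n - 1) - 2 * (g * ∑ i, ⟪h i, p i⟫) := by
    have e : ∀ i, ‖h i - x i • y - g • p i‖ ^ 2 =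
        ‖h i‖ ^ 2 - 2 * (x i * ⟪h i, y⟫) + x i ^ 2 * ‖y‖ ^ 2 - 2 * (g * ⟪h i, p i⟫)
          + 2 * g * (x i * ⟪y, p i⟫) + g ^ 2 * ‖p i‖ ^ 2 := by
      intro i
      rw [norm_sub_sq_real, norm_sub_sq_real, inner_sub_left]
      simp only [inner_smul_left, inner_smul_right, norm_smul, mul_pow, Real.norm_eq_abs, sq_abs,
        conj_trivial]
      ring
    simp only [e, Finset.sum_add_distrib, Finset.sum_sub_distrib, ← Finset.mul_sum,
      ← Finset.sum_mul, hhy, hpy, hx, hpn]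
    ring
  rw [hL, hS1, hS2, hR]
  ring

lemma norm_projPerp_sq {x : E n} (hx : ‖x‖ = 1) (w : E n) :
    ‖projPerp x w‖ ^ 2 = ‖w‖ ^ 2 - ⟪w, x⟫ ^ 2 := by
  simp only [projPerp, sub_apply, ContinuousLinearMap.id_apply,
    ContinuousLinearMap.smulRight_apply, innerSL_apply_apply]
  rw [norm_sub_sq_real, inner_smul_right, norm_smul, hx, real_inner_comm]
  simp
  ring

lemma projPerp_apply (x w : E n) : projPerp x w = w - ⟪x, w⟫ • x := by
  simp [projPerp]

lemma projPerp_self {x : E n} (hx : ‖x‖ = 1) : projPerp x x = 0 := by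
  simp [projPerp_apply, hx]

lemma projPerp_projPerp {x : E n} (hx : ‖x‖ = 1) (w : E n) :
    projPerp x (projPerp x w) = projPerp x w := by
  conv_lhs => rw [projPerp_apply x w]
  rw [map_sub, map_smul, projPerp_self hx, smul_zero, sub_zero]

lemma inner_projPerp_single {x : E n} (hx : ‖x‖ = 1) (i j : Fin n) :
    ⟪projPerp x (EuclideanSpace.single i (1 : ℝ)), projPerp x (EuclideanSpace.single j (1 : ℝ))⟫ =
      (if i = j then 1 else 0) - x i * x j := by
  simp only [projPerp_apply, inner_sub_left, inner_sub_right, inner_smul_left, inner_smul_right,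
    real_inner_self_eq_norm_sq, hx, EuclideanSpace.inner_single_right,
    EuclideanSpace.inner_single_left, PiLp.single_apply]
  simp [eq_comm]

lemma sum_smul_single (x : E n) : ∑ i, x i • EuclideanSpace.single i (1 : ℝ) = x := by
  ext k
  simp [Pi.single_apply]

lemma sum_wedge_sq {x : E n} (hx : ‖x‖ = 1) (w : E n) :
    ∑ k, ∑ l, (x k * w l - x l * w k) ^ 2 = 2 * ‖projPerp x w‖ ^ 2 := by
  rw [norm_projPerp_sq hx]
  have hx2 : ∑ i, x i ^ 2 = 1 := by rw [← EuclideanSpace.real_norm_sq_eq, hx, one_pow]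
  have hw : ⟪w, x⟫ = ∑ i, x i * w i := by simp [PiLp.inner_apply]
  have e : ∀ k l, (x k * w l - x l * w k) ^ 2 =
      x k ^ 2 * w l ^ 2 + w k ^ 2 * x l ^ 2 - 2 * ((x k * w k) * (x l * w l)) := fun k l => by ring
  rw [hw, EuclideanSpace.real_norm_sq_eq w]
  simp only [e, Finset.sum_add_distrib, Finset.sum_sub_distrib, ← Finset.sum_mul_sum, hx2]
  simp only [← Finset.mul_sum, ← Finset.sum_mul]
  ring

lemma sum_rotDeriv_sq {g : E n → ℝ} {x w : E n} (hx : ‖x‖ = 1)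
    (hw : ∀ v, fderiv ℝ g x v = ⟪w, v⟫) :
    ∑ k, ∑ l, rotDeriv k l g x ^ 2 = 2 * ‖projPerp x w‖ ^ 2 := by
  rw [← sum_wedge_sq hx]
  simp only [rotDeriv_apply, hw, EuclideanSpace.inner_single_right]
  simp

lemma fderiv_eq_inner_gradient (f : E n → ℝ) (x v : E n) :
    fderiv ℝ f x v = ⟪gradient f x, v⟫ := by
  rw [gradient, InnerProductSpace.toDual_symm_apply]

lemma inner_hess {f : E n → ℝ} {x : E n} (hf : ContDiffAt ℝ 2 f x) (v w : E n) :
    ⟪hess f x v, w⟫ = fderiv ℝ (fderiv ℝ f) x v w := by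
  have hd : DifferentiableAt ℝ (fderiv ℝ f) x :=
    (hf.fderiv_right (m := 1) (by norm_num)).differentiableAt (by norm_num)
  let L : (E n →L[ℝ] ℝ) →ₗ[ℝ] E n :=
    { toFun := (InnerProductSpace.toDual ℝ (E n)).symm
      map_add' := map_add _
      map_smul' := fun c l => by simp }
  have h : HasFDerivAt (gradient f)
      ((LinearMap.toContinuousLinearMap L).comp (fderiv ℝ (fderiv ℝ f) x)) x :=
    (LinearMap.toContinuousLinearMap L).hasFDerivAt.comp x hd.hasFDerivAt
  rw [hess, h.fderiv]
  exact InnerProductSpace.toDual_symm_apply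

lemma inner_hess_symm {f : E n → ℝ} {x : E n} (hf : ContDiffAt ℝ 2 f x) (v w : E n) :
    ⟪hess f x v, w⟫ = ⟪hess f x w, v⟫ := by
  rw [inner_hess hf, inner_hess hf]
  exact hf.isSymmSndFDerivAt (by simp) v w

lemma fderiv_rotDeriv {f : E n → ℝ} {x : E n} (hf : ContDiffAt ℝ 2 f x) (i j : Fin n) (v : E n) :
    fderiv ℝ (rotDeriv i j f) x v =
      ⟪hess f x (rotGen i j x) + (gradient f x j • EuclideanSpace.single i (1 : ℝ) -
        gradient f x i • EuclideanSpace.single j (1 : ℝ)), v⟫ := by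
  have hd : DifferentiableAt ℝ (fderiv ℝ f) x :=
    (hf.fderiv_right (m := 1) (by norm_num)).differentiableAt (by norm_num)
  have h := (hd.hasFDerivAt.clm_apply (rotGen i j).hasFDerivAt (x := x)).fderiv
  have e : fderiv ℝ (rotDeriv i j f) x v =
      fderiv ℝ (fderiv ℝ f) x v (rotGen i j x) + fderiv ℝ f x (rotGen i j v) := by
    change fderiv ℝ (fun y => fderiv ℝ f y (rotGen i j y)) x v = _
    rw [h]
    simp [add_comm]
  rw [e, ← inner_hess hf, inner_hess_symm hf, fderiv_eq_inner_gradient, inner_add_left]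
  congr 1
  rw [rotGen_apply]
  simp only [inner_sub_left, inner_sub_right, inner_smul_left, inner_smul_right,
    EuclideanSpace.inner_single_left, EuclideanSpace.inner_single_right]
  simp
  ring

/-- The second rotational derivatives of `f` express the Hilbert–Schmidt norm of the spherical
Hessian. -/
lemma sum_rotDeriv_rotDeriv_sq {f : E n → ℝ} {x : E n} (hx : ‖x‖ = 1) (hf : ContDiffAt ℝ 2 f x) :
    ∑ i, ∑ j, ∑ k, ∑ l, rotDeriv k l (rotDeriv i j f) x ^ 2 =
      4 * hsNormSq (sHess f x) + 2 * (n - 2) * ∑ i, ∑ j, rotDeriv i j f x ^ 2 := by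
  have hx2 : ∑ i, x i ^ 2 = 1 := by rw [← EuclideanSpace.real_norm_sq_eq, hx, one_pow]
  set G := gradient f x with hG
  have hin : ∑ j, x j * G j = ⟪G, x⟫ := by simp [PiLp.inner_apply]
  have hGn : ∑ j, G j ^ 2 = ‖G‖ ^ 2 := (EuclideanSpace.real_norm_sq_eq G).symm
  set p : Fin n → E n := fun i => projPerp x (EuclideanSpace.single i (1 : ℝ)) with hp
  set h : Fin n → E n := fun i => projPerp x (hess f x (EuclideanSpace.single i (1 : ℝ))) with hh
  have hy : ∑ j, x j • h j = projPerp x (hess f x x) := by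
    simp only [hh, ← map_smul, ← map_sum]
    rw [sum_smul_single]
  have hid := sum_norm_antisymm_sq h p x G hx2
    (by
      simp only [hp, ← map_smul, ← map_sum]
      rw [sum_smul_single, projPerp_self hx])
    (inner_projPerp_single hx)
  have hS : hsNormSq (sHess f x) =
      ∑ i, ‖h i - x i • (∑ j, x j • h j) - (∑ j, x j * G j) • p i‖ ^ 2 := by
    refine Finset.sum_congr rfl fun i _ => ?_
    rw [hy, hin]
    congr 2
    simp only [sHess, ContinuousLinearMap.comp_apply, sub_apply,
      smul_apply, ContinuousLinearMap.id_apply, map_sub, map_smul,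
      projPerp_projPerp hx, ← hG]
    congr 1
    conv_lhs => rw [projPerp_apply x (EuclideanSpace.single i (1 : ℝ)), map_sub, map_smul, map_sub,
      map_smul, EuclideanSpace.inner_single_right]
    simp [hh]
  have hW : ∀ i j, ∑ k, ∑ l, rotDeriv k l (rotDeriv i j f) x ^ 2 =
      2 * ‖(x i • h j + G j • p i) - (x j • h i + G i • p j)‖ ^ 2 := by
    intro i j
    rw [sum_rotDeriv_sq hx (fderiv_rotDeriv hf i j), rotGen_apply]
    congr 3
    simp only [map_add, map_sub, map_smul, hp, hh, ← hG]
    abel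
  simp only [hW, ← Finset.mul_sum, hid, ← hS]
  rw [sum_rotDeriv_sq hx (fderiv_eq_inner_gradient f x), ← hG, norm_projPerp_sq hx, hin, hGn]
  ring

/-- If `f` is orthogonal on the sphere to the polynomials of degree at most `k`, then so are its
rotational derivatives. -/
lemma integral_rotDeriv_mul_polyFun {f : E n → ℝ} {U : Set (E n)} (hU : IsOpen U)
    (hUS : sphere (0 : E n) 1 ⊆ U) (hf : ContDiffOn ℝ 1 f U) {k : ℕ}
    (horth : ∀ p ∈ MvPolynomial.restrictTotalDegree (Fin n) ℝ k,
      ∫ θ : sphere (0 : E n) 1, f θ * polyFun p θ ∂(volume : Measure (E n)).toSphere = 0)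
    (i j : Fin n) {p : MvPolynomial (Fin n) ℝ}
    (hp : p ∈ MvPolynomial.restrictTotalDegree (Fin n) ℝ k) :
    ∫ θ : sphere (0 : E n) 1, rotDeriv i j f θ * polyFun p θ
      ∂(volume : Measure (E n)).toSphere = 0 := by
  rw [integral_rotDeriv_mul hU hUS hf (contDiff_polyFun p).contDiffOn]
  simp only [rotDeriv_polyFun]
  rw [horth _ (rotPoly_mem_restrictTotalDegree i j hp), neg_zero]

/-- Second order Poincaré inequality for functions orthogonal to the polynomials of degree at most
`k`, with respect to the unnormalized surface measure. -/
lemma integral_sq_le_integral_hsNormSq (hn : 2 ≤ n) {f : E n → ℝ} {U : Set (E n)} (hU : IsOpen U)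
    (hUS : sphere (0 : E n) 1 ⊆ U) (hf : ContDiffOn ℝ 2 f U) (k : ℕ)
    (horth : ∀ p ∈ MvPolynomial.restrictTotalDegree (Fin n) ℝ k,
      ∫ θ : sphere (0 : E n) 1, f θ * polyFun p θ ∂(volume : Measure (E n)).toSphere = 0) :
    ((k + 1 : ℝ) * (k + n - 1)) * ((k + 1 : ℝ) * (k + n - 1) - (n - 2)) *
        ∫ θ : sphere (0 : E n) 1, f θ ^ 2 ∂(volume : Measure (E n)).toSphere ≤
      ∫ θ : sphere (0 : E n) 1, hsNormSq (sHess f θ) ∂(volume : Measure (E n)).toSphere := by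
  set μ := (volume : Measure (E n)).toSphere
  have hf1 : ContDiffOn ℝ 1 f U := hf.of_le (by norm_num)
  have hg (i j : Fin n) : ContDiffOn ℝ 1 (rotDeriv i j f) U :=
    contDiffOn_rotDeriv hU hf (by norm_num) i j
  have hgg (i j k l : Fin n) : ContDiffOn ℝ 0 (rotDeriv k l (rotDeriv i j f)) U :=
    contDiffOn_rotDeriv hU (hg i j) (by norm_num) k l
  have hint1 (i j : Fin n) :
      Integrable (fun θ : sphere (0 : E n) 1 => rotDeriv i j f θ ^ 2) μ :=
    integrable_sphere ((continuous_sphere_restrict hUS (hg i j).continuousOn).pow 2)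
  have hint2 (i j k l : Fin n) :
      Integrable (fun θ : sphere (0 : E n) 1 => rotDeriv k l (rotDeriv i j f) θ ^ 2) μ :=
    integrable_sphere ((continuous_sphere_restrict hUS (hgg i j k l).continuousOn).pow 2)
  set lam : ℝ := (k + 1 : ℝ) * (k + n - 1) with hlam
  have hcast : (((k + 1 : ℕ) : ℝ) * ((k + 1 : ℕ) + n - 2)) = lam := by
    rw [hlam]; push_cast; ring
  set I0 := ∫ θ : sphere (0 : E n) 1, f θ ^ 2 ∂μ
  set I1 := ∑ i, ∑ j, ∫ θ : sphere (0 : E n) 1, rotDeriv i j f θ ^ 2 ∂μ with hI1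
  set I2 := ∑ i, ∑ j, ∑ k, ∑ l,
    ∫ θ : sphere (0 : E n) 1, rotDeriv k l (rotDeriv i j f) θ ^ 2 ∂μ with hI2
  have h01 : 2 * lam * I0 ≤ I1 := hcast ▸ sphere_poincare hn hU hUS hf1 k horth
  have h12 : 2 * lam * I1 ≤ I2 := by
    rw [hI1, hI2, Finset.mul_sum]
    refine Finset.sum_le_sum fun i _ => ?_
    rw [Finset.mul_sum]
    refine Finset.sum_le_sum fun j _ => ?_
    have h := sphere_poincare hn hU hUS (hg i j) k
      fun p hp => integral_rotDeriv_mul_polyFun hU hUS hf1 horth i j hp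
    rwa [hcast] at h
  have hHS : 4 * ∫ θ : sphere (0 : E n) 1, hsNormSq (sHess f θ) ∂μ = I2 - 2 * (n - 2) * I1 := by
    have hpt (θ : sphere (0 : E n) 1) : 4 * hsNormSq (sHess f θ) =
        ∑ i, ∑ j, ∑ k, ∑ l, rotDeriv k l (rotDeriv i j f) θ ^ 2 -
          2 * (n - 2) * ∑ i, ∑ j, rotDeriv i j f θ ^ 2 := by
      rw [sum_rotDeriv_rotDeriv_sq (norm_eq_of_mem_sphere θ)
        (hf.contDiffAt (hU.mem_nhds (hUS θ.2)))]
      ring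
    have h1 (i : Fin n) : Integrable
        (fun θ : sphere (0 : E n) 1 => ∑ j, rotDeriv i j f θ ^ 2) μ :=
      integrable_finsetSum _ fun j _ => hint1 i j
    have h2 (i j k : Fin n) : Integrable
        (fun θ : sphere (0 : E n) 1 => ∑ l, rotDeriv k l (rotDeriv i j f) θ ^ 2) μ :=
      integrable_finsetSum _ fun l _ => hint2 i j k l
    have h3 (i j : Fin n) : Integrable
        (fun θ : sphere (0 : E n) 1 => ∑ k, ∑ l, rotDeriv k l (rotDeriv i j f) θ ^ 2) μ :=
      integrable_finsetSum _ fun k _ => h2 i j k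
    have h4 (i : Fin n) : Integrable
        (fun θ : sphere (0 : E n) 1 => ∑ j, ∑ k, ∑ l, rotDeriv k l (rotDeriv i j f) θ ^ 2) μ :=
      integrable_finsetSum _ fun j _ => h3 i j
    rw [← integral_const_mul]
    simp only [hpt]
    rw [integral_sub (integrable_finsetSum _ fun i _ => h4 i)
      ((integrable_finsetSum _ fun i _ => h1 i).const_mul _), integral_const_mul,
      integral_finsetSum _ fun i _ => h4 i, integral_finsetSum _ fun i _ => h1 i]
    congr 1
    · refine Finset.sum_congr rfl fun i _ => ?_
      rw [integral_finsetSum _ fun j _ => h3 i j]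
      refine Finset.sum_congr rfl fun j _ => ?_
      rw [integral_finsetSum _ fun k _ => h2 i j k]
      exact Finset.sum_congr rfl fun k _ => integral_finsetSum _ fun l _ => hint2 i j k l
    · congr 1
      exact Finset.sum_congr rfl fun i _ => integral_finsetSum _ fun j _ => hint1 i j
  have hk : (0 : ℝ) ≤ k := k.cast_nonneg
  have hn' : (2 : ℝ) ≤ n := by exact_mod_cast hn
  have hgap : 0 ≤ lam - (n - 2) := by rw [hlam]; nlinarith
  nlinarith [mul_le_mul_of_nonneg_left h01 hgap]

/-- The integral against the uniform probability measure is a positive multiple of the integral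
against the surface measure. -/
lemma exists_integral_sphMeasure (hn : 2 ≤ n) :
    ∃ c : ℝ, 0 < c ∧ ∀ F : E n → ℝ, ∫ θ, F θ ∂sphMeasure n =
      c * ∫ θ : sphere (0 : E n) 1, F θ ∂(volume : Measure (E n)).toSphere := by
  have : Nontrivial (E n) := by
    have : Nonempty (Fin n) := ⟨⟨0, by omega⟩⟩
    infer_instance
  have hemb : MeasurableEmbedding (Subtype.val : sphere (0 : E n) 1 → E n) :=
    MeasurableEmbedding.subtype_coe isClosed_sphere.measurableSet
  have hmass : ((volume : Measure (E n)).toSphere.map Subtype.val) Set.univ =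
      (volume : Measure (E n)).toSphere Set.univ := by
    rw [hemb.map_apply, Set.preimage_univ]
  refine ⟨((volume : Measure (E n)).toSphere Set.univ)⁻¹.toReal, ENNReal.toReal_pos ?_ ?_,
    fun F => ?_⟩
  · exact ENNReal.inv_ne_zero.2 (measure_ne_top _ _)
  · rw [ENNReal.inv_ne_top, Ne, Measure.measure_univ_eq_zero]
    exact Measure.toSphere_ne_zero _
  · rw [sphMeasure, hmass, integral_smul_measure, hemb.integral_map, smul_eq_mul]

lemma integral_mul_polyFun_of_degree_zero {f : E n → ℝ}
    (h0 : ∫ θ : sphere (0 : E n) 1, f θ ∂(volume : Measure (E n)).toSphere = 0)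
    {p : MvPolynomial (Fin n) ℝ} (hp : p.totalDegree = 0) :
    ∫ θ : sphere (0 : E n) 1, f θ * polyFun p θ ∂(volume : Measure (E n)).toSphere = 0 := by
  rw [MvPolynomial.totalDegree_eq_zero_iff_eq_C.1 hp]
  simp only [polyFun_C]
  rw [integral_mul_const, h0, zero_mul]

/-- A linear form is the inner product with a vector. -/
lemma exists_polyFun_eq_inner {p : MvPolynomial (Fin n) ℝ} (hp : p.IsHomogeneous 1) :
    ∃ v : E n, ∀ x, polyFun p x = ⟪v, x⟫ := by
  have hc (i : Fin n) : MvPolynomial.pderiv i p =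
      MvPolynomial.C ((MvPolynomial.pderiv i p).coeff 0) :=
    MvPolynomial.totalDegree_eq_zero_iff_eq_C.1
      (Nat.le_zero.1 (hp.pderiv (i := i)).totalDegree_le)
  refine ⟨WithLp.toLp 2 fun i => (MvPolynomial.pderiv i p).coeff 0, fun x => ?_⟩
  have h := congrArg (fun q => polyFun q x) hp.sum_X_mul_pderiv
  simp only [polyFun, map_sum, map_mul, MvPolynomial.eval_X, one_smul] at h
  rw [polyFun, ← h, PiLp.inner_apply]
  refine Finset.sum_congr rfl fun i _ => ?_
  rw [hc i]
  simp

lemma integral_mul_polyFun_of_degree_le_one {f : E n → ℝ} {U : Set (E n)}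
    (hUS : sphere (0 : E n) 1 ⊆ U) (hf : ContinuousOn f U)
    (h0 : ∫ θ : sphere (0 : E n) 1, f θ ∂(volume : Measure (E n)).toSphere = 0)
    (h1 : ∀ v : E n,
      ∫ θ : sphere (0 : E n) 1, ⟪v, (θ : E n)⟫ * f θ ∂(volume : Measure (E n)).toSphere = 0)
    {p : MvPolynomial (Fin n) ℝ} (hp : p ∈ MvPolynomial.restrictTotalDegree (Fin n) ℝ 1) :
    ∫ θ : sphere (0 : E n) 1, f θ * polyFun p θ ∂(volume : Measure (E n)).toSphere = 0 := by
  have hint (q : MvPolynomial (Fin n) ℝ) : Integrable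
      (fun θ : sphere (0 : E n) 1 => f θ * polyFun q θ) (volume : Measure (E n)).toSphere :=
    integrable_sphere ((continuous_sphere_restrict hUS hf).mul
      ((contDiff_polyFun q (k := 0)).continuous.comp continuous_subtype_val))
  have hhom (m : ℕ) (hm : m ≤ 1) (q : MvPolynomial (Fin n) ℝ) (hq : q.IsHomogeneous m) :
      ∫ θ : sphere (0 : E n) 1, f θ * polyFun q θ ∂(volume : Measure (E n)).toSphere = 0 := by
    rcases Nat.le_one_iff_eq_zero_or_eq_one.1 hm with h | h
    · exact integral_mul_polyFun_of_degree_zero h0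
        ((MvPolynomial.totalDegree_zero_iff_isHomogeneous _).2 (h ▸ hq))
    · obtain ⟨v, hv⟩ := exists_polyFun_eq_inner (h ▸ hq)
      rw [← h1 v]
      exact integral_congr_ae (Eventually.of_forall fun θ => by simp only [hv, mul_comm])
  have hadd (q r : MvPolynomial (Fin n) ℝ)
      (hq : ∫ θ : sphere (0 : E n) 1, f θ * polyFun q θ ∂(volume : Measure (E n)).toSphere = 0)
      (hr : ∫ θ : sphere (0 : E n) 1, f θ * polyFun r θ ∂(volume : Measure (E n)).toSphere = 0) :
      ∫ θ : sphere (0 : E n) 1, f θ * polyFun (q + r) θ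
        ∂(volume : Measure (E n)).toSphere = 0 := by
    simp only [polyFun_add, Pi.add_apply, mul_add]
    rw [integral_add (hint q) (hint r), hq, hr, add_zero]
  exact restrictTotalDegree_induction hhom hadd hp

end Sphere

/-- **Proposition 5.2 (Statement 14).** Second order Poincaré-type inequalities on the
sphere in terms of the spherical Hessian. -/
theorem second_order_poincare_sphere
    {n : ℕ} (hn : 2 ≤ n) (f : E n → ℝ) (U : Set (E n)) (hU : IsOpen U)
    (hUS : Metric.sphere (0 : E n) 1 ⊆ U) (hf : ContDiffOn ℝ 2 f U)
    (hmean : ∫ θ, f θ ∂sphMeasure n = 0) :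
    (∫ θ, (f θ) ^ 2 ∂sphMeasure n ≤
      (1 / ((n : ℝ) - 1)) * ∫ θ, hsNormSq (sHess f θ) ∂sphMeasure n) ∧
    ((∀ v : E n, ∫ θ, ⟪v, θ⟫ * f θ ∂sphMeasure n = 0) →
      ∫ θ, (f θ) ^ 2 ∂sphMeasure n ≤
        (1 / (2 * (n : ℝ) * ((n : ℝ) + 2))) * ∫ θ, hsNormSq (sHess f θ) ∂sphMeasure n) := by
  obtain ⟨c, hc, hint⟩ := exists_integral_sphMeasure hn
  have hn' : (2 : ℝ) ≤ n := by exact_mod_cast hn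
  have h0 : ∫ θ : sphere (0 : E n) 1, f θ ∂(volume : Measure (E n)).toSphere = 0 := by
    rw [hint] at hmean
    exact (mul_eq_zero.1 hmean).resolve_left hc.ne'
  rw [hint, hint]
  refine ⟨?_, fun hlin => ?_⟩
  · have h := integral_sq_le_integral_hsNormSq hn hU hUS hf 0 fun p hp =>
      integral_mul_polyFun_of_degree_zero h0
        (Nat.le_zero.1 ((MvPolynomial.mem_restrictTotalDegree _ _ _).1 hp))
    rw [mul_left_comm]
    refine mul_le_mul_of_nonneg_left ?_ hc.le
    rw [one_div, ← div_eq_inv_mul, le_div_iff₀ (by linarith)]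
    push_cast at h
    linarith
  · have h1 (v : E n) : ∫ θ : sphere (0 : E n) 1, ⟪v, (θ : E n)⟫ * f θ
        ∂(volume : Measure (E n)).toSphere = 0 := by
      have hv := hlin v
      rw [hint] at hv
      exact (mul_eq_zero.1 hv).resolve_left hc.ne'
    have h := integral_sq_le_integral_hsNormSq hn hU hUS hf 1 fun p hp =>
      integral_mul_polyFun_of_degree_le_one hUS hf.continuousOn h0 h1 hp
    rw [mul_left_comm]
    refine mul_le_mul_of_nonneg_left ?_ hc.le
    rw [one_div, ← div_eq_inv_mul, le_div_iff₀ (by positivity)]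
    push_cast at h
    linarith

end SecondOrderConc
end
end

section
/- Let f be C²-smooth on an open neighbourhood of S^{n-1} whose restriction to S^{n-1} is orthogonal to all linear functions. Then ∫ |∇_S f|² dσ_{n-1} ≤ (1/(n−1)) ∫ ‖f''‖²_HS dσ_{n-1}, where f'' is the Euclidean Hessian. -/
open MeasureTheory Metric Filter
open scoped RealInnerProductSpace ENNReal NNReal

noncomputable section

namespace SecondOrderConc

variable {n : ℕ}

section GaussianPoincare

open ProbabilityTheory Topology

/-- The standard Gaussian measure on `ℝ`. -/
abbrev gauss : Measure ℝ := gaussianReal 0 1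

/-- The density of the standard Gaussian measure on `ℝ`. -/
abbrev gaussDensity : ℝ → ℝ := gaussianPDFReal 0 1

lemma integral_sub_const_sq {α : Type*} [MeasurableSpace α] {μ : Measure α}
    [IsProbabilityMeasure μ] {F : α → ℝ} (hF : MemLp F 2 μ) (a : ℝ) :
    ∫ x, (F x - a) ^ 2 ∂μ = ∫ x, F x ^ 2 ∂μ - 2 * a * ∫ x, F x ∂μ + a ^ 2 := by
  have h2 := hF.integrable_sq
  have h1 : Integrable (fun x ↦ 2 * a * F x) μ := (hF.integrable one_le_two).const_mul _
  have h3 : Integrable (fun x ↦ F x ^ 2 - 2 * a * F x) μ := h2.sub h1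
  have : ∀ x, (F x - a) ^ 2 = F x ^ 2 - 2 * a * F x + a ^ 2 := fun x ↦ by ring
  simp_rw [this]
  rw [integral_add h3 (integrable_const _), integral_sub h2 h1, integral_const_mul]
  simp

lemma hasDerivAt_gaussDensity (x : ℝ) : HasDerivAt gaussDensity (-x * gaussDensity x) x := by
  have h : gaussDensity = fun x ↦ (√(2 * Real.pi))⁻¹ * Real.exp (-x ^ 2 / 2) := by
    ext y; simp [gaussDensity, gaussianPDFReal]
  rw [h]
  have := ((((hasDerivAt_id x).pow 2).neg.div_const 2).exp).const_mul (√(2 * Real.pi))⁻¹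
  refine this.congr_deriv ?_
  simp only [id, Nat.cast_ofNat, Nat.add_one_sub_one, pow_one, mul_one, Pi.pow_apply, Pi.neg_apply]
  ring

lemma continuous_gaussDensity : Continuous gaussDensity :=
  continuous_iff_continuousAt.2 fun x ↦ (hasDerivAt_gaussDensity x).continuousAt

lemma gaussDensity_nonneg (x : ℝ) : 0 ≤ gaussDensity x := gaussianPDFReal_nonneg 0 1 x

lemma integrable_gauss_iff {F : ℝ → ℝ} :
    Integrable F gauss ↔ Integrable fun x ↦ gaussDensity x * F x := by
  rw [gauss, gaussianReal_of_var_ne_zero 0 one_ne_zero,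
    integrable_withDensity_iff_integrable_smul' (measurable_gaussianPDF 0 1)
      (ae_of_all _ fun _ ↦ gaussianPDF_lt_top)]
  simp [toReal_gaussianPDF]

lemma integral_Icc_sq_le_of_pos {g D : ℝ → ℝ} (hg : ∀ x, HasDerivAt g (D x) x) (hD : Continuous D)
    {ε R : ℝ} (hε : 0 < ε) (hR : ε ≤ R) :
    ∫ x in ε..R, gaussDensity x * g x ^ 2 ≤
      (∫ x in ε..R, gaussDensity x * D x ^ 2) + g ε ^ 2 * gaussDensity ε / ε := by
  have hgc : Continuous g := continuous_iff_continuousAt.2 fun x ↦ (hg x).continuousAt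
  have hφ := continuous_gaussDensity
  set w : ℝ → ℝ := fun x ↦ gaussDensity x * (2 * g x * D x / x - g x ^ 2 / x ^ 2 - g x ^ 2)
  have hne : ∀ x ∈ Set.uIcc ε R, x ≠ 0 := fun x hx ↦ by
    rw [Set.uIcc_of_le hR] at hx; exact (hε.trans_le hx.1).ne'
  have hw : IntervalIntegrable w volume ε R := by
    refine ContinuousOn.intervalIntegrable (hφ.continuousOn.mul ?_)
    refine ContinuousOn.sub (ContinuousOn.sub ?_ ?_) (by fun_prop)
    · exact ContinuousOn.div (by fun_prop) (by fun_prop) hne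
    · exact ContinuousOn.div (by fun_prop) (by fun_prop) fun x hx ↦ pow_ne_zero 2 (hne x hx)
  have hder : ∀ x ∈ Set.uIcc ε R,
      HasDerivAt (fun x ↦ g x ^ 2 * gaussDensity x / x) (w x) x := fun x hx ↦ by
    have h0 := hne x hx
    refine ((((hg x).pow 2).mul (hasDerivAt_gaussDensity x)).div (hasDerivAt_id x) h0).congr_deriv ?_
    simp only [w, Pi.pow_apply, Pi.mul_apply, id]
    field_simp
    push_cast
    ring
  have hint := intervalIntegral.integral_eq_sub_of_hasDerivAt hder hw
  have h1 : IntervalIntegrable (fun x ↦ gaussDensity x * g x ^ 2) volume ε R :=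
    Continuous.intervalIntegrable (by fun_prop) _ _
  have h2 : IntervalIntegrable (fun x ↦ gaussDensity x * D x ^ 2) volume ε R :=
    Continuous.intervalIntegrable (by fun_prop) _ _
  have hmono := intervalIntegral.integral_mono_on hR (h1.add hw) h2 fun x hx ↦ by
    have h0 : x ≠ 0 := (hε.trans_le hx.1).ne'
    have := mul_nonneg (gaussDensity_nonneg x) (sq_nonneg (D x - g x / x))
    have e : gaussDensity x * (D x - g x / x) ^ 2 =
      gaussDensity x * D x ^ 2 - (gaussDensity x * g x ^ 2 + w x) := by
      simp only [w]; field_simp; ring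
    linarith
  rw [intervalIntegral.integral_add h1 hw, hint] at hmono
  have : 0 ≤ g R ^ 2 * gaussDensity R / R :=
    div_nonneg (mul_nonneg (sq_nonneg _) (gaussDensity_nonneg _)) (hε.le.trans hR)
  linarith

lemma integral_Ioi_sq_le {g D : ℝ → ℝ} (hg : ∀ x, HasDerivAt g (D x) x) (hD : Continuous D)
    (h0 : g 0 = 0) (hgi : Integrable fun x ↦ gaussDensity x * g x ^ 2)
    (hDi : Integrable fun x ↦ gaussDensity x * D x ^ 2) :
    ∫ x in Set.Ioi 0, gaussDensity x * g x ^ 2 ≤ ∫ x in Set.Ioi 0, gaussDensity x * D x ^ 2 := by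
  have hgc : Continuous g := continuous_iff_continuousAt.2 fun x ↦ (hg x).continuousAt
  have hφ := continuous_gaussDensity
  refine le_of_tendsto_of_tendsto
    (intervalIntegral_tendsto_integral_Ioi 0 hgi.integrableOn tendsto_id)
    (intervalIntegral_tendsto_integral_Ioi 0 hDi.integrableOn tendsto_id)
    ((eventually_gt_atTop 0).mono fun R hR ↦ ?_)
  have hlim : ∀ F : ℝ → ℝ, Continuous F →
      Tendsto (fun ε ↦ ∫ x in ε..R, F x) (𝓝[>] 0) (𝓝 (∫ x in (0 : ℝ)..R, F x)) := fun F hF ↦ by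
    have : Continuous fun ε ↦ ∫ x in ε..R, F x := by
      simp_rw [intervalIntegral.integral_symm R]
      exact (intervalIntegral.continuous_primitive (fun a b ↦ hF.intervalIntegrable a b) R).neg
    exact (this.tendsto 0).mono_left nhdsWithin_le_nhds
  have hb : Tendsto (fun ε ↦ g ε ^ 2 * gaussDensity ε / ε) (𝓝[>] 0) (𝓝 0) := by
    have h1 : Tendsto (fun ε ↦ g ε / ε) (𝓝[>] 0) (𝓝 (D 0)) := by
      have := (hg 0).tendsto_slope_zero_right
      simpa [h0, div_eq_inv_mul] using this
    have h2 : Tendsto (fun ε ↦ g ε * gaussDensity ε) (𝓝[>] 0) (𝓝 (g 0 * gaussDensity 0)) :=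
      ((hgc.mul hφ).tendsto 0).mono_left nhdsWithin_le_nhds
    have := h1.mul h2
    rw [h0, zero_mul, mul_zero] at this
    refine this.congr fun ε ↦ by ring
  have hev : ∀ᶠ ε in 𝓝[>] (0 : ℝ), 0 < ε ∧ ε ≤ R := by
    filter_upwards [Ioc_mem_nhdsGT hR] with ε hε using hε
  simpa using le_of_tendsto_of_tendsto (hlim _ (by fun_prop)) ((hlim _ (by fun_prop)).add hb)
    (hev.mono fun ε hε ↦ integral_Icc_sq_le_of_pos hg hD hε.1 hε.2)

/-- The one-dimensional Gaussian Poincaré inequality. -/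
lemma gauss_poincare {g D : ℝ → ℝ} (hg : ∀ x, HasDerivAt g (D x) x) (hD : Continuous D)
    (hgL : MemLp g 2 gauss) (hDL : MemLp D 2 gauss) :
    ∫ x, g x ^ 2 ∂gauss - (∫ x, g x ∂gauss) ^ 2 ≤ ∫ x, D x ^ 2 ∂gauss := by
  set a := g 0
  have hk : MemLp (fun x ↦ g x - a) 2 gauss := hgL.sub (memLp_const a)
  have hki := integrable_gauss_iff.1 hk.integrable_sq
  have hDi := integrable_gauss_iff.1 hDL.integrable_sq
  have hpos := integral_Ioi_sq_le (g := fun x ↦ g x - a) (D := D)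
    (fun x ↦ (hg x).sub_const a) hD (by simp [a]) hki hDi
  have heven : ∀ x, gaussDensity (-x) = gaussDensity x := fun x ↦ by
    simp [gaussDensity, gaussianPDFReal]
  have hneg := integral_Ioi_sq_le (g := fun x ↦ g (-x) - a) (D := fun x ↦ -D (-x))
    (fun x ↦ by simpa using ((hg (-x)).comp x (hasDerivAt_neg x)).sub_const a) (by fun_prop)
    (by simp [a]) (by simpa [heven] using hki.comp_neg) (by simpa [heven] using hDi.comp_neg)
  have h1 := integral_comp_neg_Ioi 0 fun x ↦ gaussDensity x * (g x - a) ^ 2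
  have h2 := integral_comp_neg_Ioi 0 fun x ↦ gaussDensity x * D x ^ 2
  simp only [heven, neg_sq, neg_zero] at h1 h2 hneg
  rw [h1, h2] at hneg
  have hsplit : ∀ F : ℝ → ℝ, Integrable F →
      ∫ x, F x = (∫ x in Set.Iic 0, F x) + ∫ x in Set.Ioi 0, F x := fun F hF ↦
    (intervalIntegral.integral_Iic_add_Ioi hF.integrableOn hF.integrableOn).symm
  have hcent : ∫ x, (g x - a) ^ 2 ∂gauss ≤ ∫ x, D x ^ 2 ∂gauss := by
    rw [integral_gaussianReal_eq_integral_smul one_ne_zero,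
      integral_gaussianReal_eq_integral_smul one_ne_zero]
    simp only [smul_eq_mul]
    rw [hsplit _ hki, hsplit _ hDi]
    exact add_le_add hneg hpos
  rw [integral_sub_const_sq hgL] at hcent
  nlinarith [sq_nonneg (a - ∫ x, g x ∂gauss)]
lemma sq_integral_le {α : Type*} [MeasurableSpace α] {μ : Measure α}
    [IsProbabilityMeasure μ] {F : α → ℝ} (hF : MemLp F 2 μ) :
    (∫ x, F x ∂μ) ^ 2 ≤ ∫ x, F x ^ 2 ∂μ := by
  have h := integral_sub_const_sq hF (∫ x, F x ∂μ)
  have : 0 ≤ ∫ x, (F x - ∫ x, F x ∂μ) ^ 2 ∂μ := integral_nonneg fun x ↦ sq_nonneg _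
  nlinarith

section Tensorization

variable {α β : Type*} [MeasurableSpace α] [MeasurableSpace β] {μ : Measure α} {ν : Measure β}
  [IsProbabilityMeasure μ] [IsProbabilityMeasure ν]

lemma ae_memLp_two_slice {g : α × β → ℝ} (hg : MemLp g 2 (μ.prod ν)) :
    ∀ᵐ x ∂μ, MemLp (fun y ↦ g (x, y)) 2 ν := by
  filter_upwards [hg.1.prodMk_left, hg.integrable_sq.prod_right_ae] with x h1 h2
  exact (memLp_two_iff_integrable_sq h1).2 h2

lemma memLp_two_marginal {g : α × β → ℝ} (hg : MemLp g 2 (μ.prod ν)) :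
    MemLp (fun x ↦ ∫ y, g (x, y) ∂ν) 2 μ := by
  have hm := hg.1.integral_prod_right'
  refine (memLp_two_iff_integrable_sq hm).2
    (hg.integrable_sq.integral_prod_left.mono' (hm.pow 2) ?_)
  filter_upwards [ae_memLp_two_slice hg] with x hx
  rw [Real.norm_of_nonneg (sq_nonneg _)]
  exact sq_integral_le hx

lemma memLp_two_swap {g : α × β → ℝ} (hg : MemLp g 2 (μ.prod ν)) :
    MemLp (fun p : β × α ↦ g (p.2, p.1)) 2 (ν.prod μ) :=
  hg.comp_measurePreserving Measure.measurePreserving_swap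

/-- Subadditivity of the variance on a product of two probability spaces. -/
lemma variance_prod_le {g : α × β → ℝ} (hg : MemLp g 2 (μ.prod ν)) :
    ∫ p, g p ^ 2 ∂(μ.prod ν) - (∫ p, g p ∂(μ.prod ν)) ^ 2 ≤
      ∫ y, (∫ x, g (x, y) ^ 2 ∂μ - (∫ x, g (x, y) ∂μ) ^ 2) ∂ν +
      ∫ x, (∫ y, g (x, y) ^ 2 ∂ν - (∫ y, g (x, y) ∂ν) ^ 2) ∂μ := by
  have hs := memLp_two_swap hg
  have hM := memLp_two_marginal hg
  have hm := memLp_two_marginal hs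
  set M : α → ℝ := fun x ↦ ∫ y, g (x, y) ∂ν
  set m : β → ℝ := fun y ↦ ∫ x, g (x, y) ∂μ
  have hgi := hg.integrable one_le_two
  have hcM : ∫ x, M x ∂μ = ∫ p, g p ∂(μ.prod ν) := (integral_prod _ hgi).symm
  have hcm : ∫ y, m y ∂ν = ∫ p, g p ∂(μ.prod ν) := (integral_prod_symm _ hgi).symm
  set c := ∫ p, g p ∂(μ.prod ν)
  have hk : MemLp (fun p ↦ g p - M p.1) 2 (μ.prod ν) :=
    hg.sub (hM.comp_measurePreserving measurePreserving_fst)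
  have hks := memLp_two_swap hk
  have hjensen : ∫ y, (m y - c) ^ 2 ∂ν ≤ ∫ y, ∫ x, (g (x, y) - M x) ^ 2 ∂μ ∂ν := by
    refine integral_mono_ae (hm.sub (memLp_const c)).integrable_sq
      hks.integrable_sq.integral_prod_left ?_
    filter_upwards [ae_memLp_two_slice hks, ae_memLp_two_slice hs] with y hy hy'
    have := sq_integral_le hy
    rwa [integral_sub (hy'.integrable one_le_two) (hM.integrable one_le_two), hcM] at this
  have hfub : ∫ y, ∫ x, (g (x, y) - M x) ^ 2 ∂μ ∂ν =
      ∫ x, (∫ y, g (x, y) ^ 2 ∂ν - M x ^ 2) ∂μ := by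
    rw [← integral_integral_swap (f := fun x y ↦ (g (x, y) - M x) ^ 2) hk.integrable_sq]
    refine integral_congr_ae ?_
    filter_upwards [ae_memLp_two_slice hg] with x hx
    rw [integral_sub_const_sq hx]
    simp only [M]
    ring
  rw [integral_sub_const_sq hm, hcm] at hjensen
  have h2 : ∫ p, g p ^ 2 ∂(μ.prod ν) = ∫ y, ∫ x, g (x, y) ^ 2 ∂μ ∂ν :=
    integral_prod_symm _ hg.integrable_sq
  have h3 : ∫ y, (∫ x, g (x, y) ^ 2 ∂μ - m y ^ 2) ∂ν =
      ∫ y, ∫ x, g (x, y) ^ 2 ∂μ ∂ν - ∫ y, m y ^ 2 ∂ν :=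
    integral_sub hs.integrable_sq.integral_prod_left hm.integrable_sq
  rw [h3, h2, ← hfub]
  linarith

end Tensorization

/-- The standard Gaussian measure on `ℝⁿ`. -/
abbrev gaussPi (n : ℕ) : Measure (Fin n → ℝ) := Measure.pi fun _ ↦ gauss

lemma piFinSuccAbove_zero_symm (n : ℕ) :
    (MeasurableEquiv.piFinSuccAbove (fun _ : Fin (n + 1) ↦ ℝ) 0).symm =
      fun p : ℝ × (Fin n → ℝ) ↦ (Fin.cons p.1 p.2 : Fin (n + 1) → ℝ) := by
  ext p i
  simp [MeasurableEquiv.piFinSuccAbove_symm_apply, Fin.insertNthEquiv]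

lemma measurePreserving_cons_gaussPi (n : ℕ) :
    MeasurePreserving (fun p : ℝ × (Fin n → ℝ) ↦ (Fin.cons p.1 p.2 : Fin (n + 1) → ℝ))
      (gauss.prod (gaussPi n)) (gaussPi (n + 1)) := by
  have := (measurePreserving_piFinSuccAbove (fun _ : Fin (n + 1) ↦ gauss) 0).symm
  rwa [piFinSuccAbove_zero_symm] at this

/-- The Gaussian Poincaré inequality on `ℝⁿ`, for functions which are `C¹` along almost every
line parallel to a coordinate axis. -/
lemma gaussPi_poincare {n : ℕ} {g : (Fin n → ℝ) → ℝ} {D : Fin n → (Fin n → ℝ) → ℝ}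
    (hg : MemLp g 2 (gaussPi n)) (hD : ∀ i, MemLp (D i) 2 (gaussPi n))
    (hder : ∀ i, ∀ᵐ x ∂gaussPi n,
      (∀ t, HasDerivAt (fun s ↦ g (Function.update x i s)) (D i (Function.update x i t)) t) ∧
      Continuous fun t ↦ D i (Function.update x i t)) :
    ∫ x, g x ^ 2 ∂gaussPi n - (∫ x, g x ∂gaussPi n) ^ 2 ≤ ∑ i, ∫ x, D i x ^ 2 ∂gaussPi n := by
  induction n with
  | zero =>
    have hpi : gaussPi 0 = Measure.dirac isEmptyElim := Measure.pi_of_empty _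
    simp [hpi]
  | succ n ih =>
    have hp := measurePreserving_cons_gaussPi n
    have hme : MeasurableEmbedding
        (fun p : ℝ × (Fin n → ℝ) ↦ (Fin.cons p.1 p.2 : Fin (n + 1) → ℝ)) :=
      piFinSuccAbove_zero_symm n ▸
        (MeasurableEquiv.piFinSuccAbove (fun _ : Fin (n + 1) ↦ ℝ) 0).symm.measurableEmbedding
    have hint : ∀ F : (Fin (n + 1) → ℝ) → ℝ, ∫ x, F x ∂gaussPi (n + 1) =
        ∫ p : ℝ × (Fin n → ℝ), F (Fin.cons p.1 p.2) ∂(gauss.prod (gaussPi n)) :=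
      fun F ↦ (hp.integral_comp hme F).symm
    have hg' : MemLp (fun p : ℝ × (Fin n → ℝ) ↦ g (Fin.cons p.1 p.2)) 2
      (gauss.prod (gaussPi n)) := hg.comp_measurePreserving hp
    have hD' : ∀ i, MemLp (fun p : ℝ × (Fin n → ℝ) ↦ D i (Fin.cons p.1 p.2)) 2
      (gauss.prod (gaussPi n)) := fun i ↦ (hD i).comp_measurePreserving hp
    have hder' := fun i ↦ hp.quasiMeasurePreserving.ae (hder i)
    simp only [hint]
    refine (variance_prod_le hg').trans ?_
    rw [Fin.sum_univ_succ]
    refine add_le_add ?_ ?_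
    · rw [integral_prod_symm _ (hD' 0).integrable_sq]
      refine integral_mono_ae ?_ (memLp_two_swap (hD' 0)).integrable_sq.integral_prod_left ?_
      · exact (memLp_two_swap hg').integrable_sq.integral_prod_left.sub
          (memLp_two_marginal (memLp_two_swap hg')).integrable_sq
      · have h0 := Measure.measurePreserving_swap (μ := gaussPi n) (ν := gauss)
          |>.quasiMeasurePreserving.ae (hder' 0)
        filter_upwards [ae_memLp_two_slice (memLp_two_swap hg'),
          ae_memLp_two_slice (memLp_two_swap (hD' 0)), Measure.ae_ae_of_ae_prod h0] with y h1 h2 h3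
        obtain ⟨x, hx1, hx2⟩ := h3.exists
        simp only [Prod.fst_swap, Prod.snd_swap, Fin.update_cons_zero] at hx1 hx2
        exact gauss_poincare hx1 hx2 h1 h2
    · have hsum : ∑ i : Fin n, ∫ p : ℝ × (Fin n → ℝ), D i.succ (Fin.cons p.1 p.2) ^ 2
          ∂(gauss.prod (gaussPi n)) =
          ∫ x, ∑ i : Fin n, ∫ y, D i.succ (Fin.cons x y) ^ 2 ∂gaussPi n ∂gauss := by
        rw [integral_finsetSum _ fun i _ ↦ (hD' i.succ).integrable_sq.integral_prod_left]
        exact Finset.sum_congr rfl fun i _ ↦ integral_prod _ (hD' i.succ).integrable_sq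
      rw [hsum]
      refine integral_mono_ae ?_
        (integrable_finsetSum _ fun i _ ↦ (hD' i.succ).integrable_sq.integral_prod_left) ?_
      · exact hg'.integrable_sq.integral_prod_left.sub (memLp_two_marginal hg').integrable_sq
      · filter_upwards [ae_memLp_two_slice hg',
          ae_all_iff.2 fun i : Fin n ↦ ae_memLp_two_slice (hD' i.succ),
          ae_all_iff.2 fun i : Fin n ↦ Measure.ae_ae_of_ae_prod (hder' i.succ)] with x h1 h2 h3
        refine ih h1 h2 fun i ↦ ?_
        simpa only [Fin.cons_update] using h3 i

/-- The density of `gaussPi n` as a function of the Euclidean norm. -/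
def radialDensity (n : ℕ) (r : ℝ) : ℝ := (√(2 * Real.pi))⁻¹ ^ n * Real.exp (-r ^ 2 / 2)

lemma prod_gaussDensity {n : ℕ} (x : Fin n → ℝ) :
    ∏ i, gaussDensity (x i) = radialDensity n ‖(WithLp.toLp 2 x : E n)‖ := by
  simp only [gaussDensity, gaussianPDFReal, radialDensity, EuclideanSpace.norm_sq_eq,
    Finset.prod_mul_distrib, ← Real.exp_sum]
  simp [← Finset.sum_div]

lemma continuous_radialDensity (n : ℕ) : Continuous (radialDensity n) := by
  unfold radialDensity; fun_prop

lemma radialDensity_nonneg (n : ℕ) (r : ℝ) : 0 ≤ radialDensity n r := by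
  unfold radialDensity; positivity

lemma gaussPi_eq_withDensity (n : ℕ) :
    gaussPi n = volume.withDensity
      fun x ↦ ((radialDensity n ‖(WithLp.toLp 2 x : E n)‖).toNNReal : ℝ≥0∞) := by
  refine Measure.pi_eq fun s hs ↦ ?_
  rw [withDensity_apply _ (MeasurableSet.univ_pi hs)]
  change ∫⁻ x in _, ENNReal.ofReal _ = _
  simp_rw [← prod_gaussDensity]
  rw [volume_pi, Measure.restrict_pi_pi,
    ← ofReal_integral_eq_lintegral_ofReal
      (Integrable.fintype_prod fun i ↦ (integrable_gaussianPDFReal 0 1).restrict)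
      (ae_of_all _ fun x ↦ Finset.prod_nonneg fun i _ ↦ gaussDensity_nonneg _),
    integral_fintype_prod_eq_prod,
    ENNReal.ofReal_prod_of_nonneg fun i _ ↦ integral_nonneg gaussDensity_nonneg]
  exact Finset.prod_congr rfl fun i _ ↦ (gaussianReal_apply_eq_integral 0 one_ne_zero _).symm

lemma integral_gaussPi (n : ℕ) (F : E n → ℝ) :
    ∫ x, F (WithLp.toLp 2 x) ∂gaussPi n = ∫ x : E n, radialDensity n ‖x‖ * F x := by
  rw [gaussPi_eq_withDensity, integral_withDensity_eq_integral_smul]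
  · rw [← (EuclideanSpace.volume_preserving_symm_measurableEquiv_toLp (Fin n)).symm.integral_comp']
    refine integral_congr_ae (ae_of_all _ fun x ↦ ?_)
    simp [NNReal.smul_def, radialDensity_nonneg]
  · have := (continuous_radialDensity n).measurable
    fun_prop

lemma integral_toSphere_mul {n : ℕ} [NeZero n] (u : ℝ → ℝ) (h : E n → ℝ) :
    ∫ x : E n, u ‖x‖ * h (‖x‖⁻¹ • x) =
      (∫ θ, h θ ∂(volume : Measure (E n)).toSphere) *
        ∫ r, u r ∂(Measure.volumeIoiPow (Module.finrank ℝ (E n) - 1)) := by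
  calc
    _ = ∫ x : ({(0)}ᶜ : Set (E n)), u ‖x.1‖ * h (‖x.1‖⁻¹ • x.1) ∂(volume.comap Subtype.val) := by
      rw [integral_subtype_comap (measurableSet_singleton _).compl
        fun x : E n ↦ u ‖x‖ * h (‖x‖⁻¹ • x), restrict_compl_singleton]
    _ = ∫ p, h p.1 * u p.2 ∂(volume : Measure (E n)).toSphere.prod
          (.volumeIoiPow (Module.finrank ℝ (E n) - 1)) := by
      rw [← (volume : Measure (E n)).measurePreserving_homeomorphUnitSphereProd.integral_comp
        (Homeomorph.measurableEmbedding _)]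
      simp [mul_comm]
    _ = _ := integral_prod_mul (fun θ : sphere (0 : E n) 1 ↦ h θ) (fun r : Set.Ioi (0 : ℝ) ↦ u r)

lemma integral_sphMeasure {n : ℕ} (h : E n → ℝ) :
    ∫ θ, h θ ∂sphMeasure n = ((volume : Measure (E n)).toSphere.real Set.univ)⁻¹ *
      ∫ θ, h θ ∂(volume : Measure (E n)).toSphere := by
  have hme : MeasurableEmbedding (Subtype.val : sphere (0 : E n) 1 → E n) :=
    .subtype_coe isClosed_sphere.measurableSet
  rw [sphMeasure, integral_smul_measure, hme.integral_map, hme.map_apply]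
  simp [Measure.real]

lemma toSphere_real_univ_ne_zero (n : ℕ) [NeZero n] :
    (volume : Measure (E n)).toSphere.real Set.univ ≠ 0 := by
  rw [Measure.real, ENNReal.toReal_ne_zero]
  exact ⟨Measure.measure_univ_ne_zero.2 (Measure.toSphere_ne_zero _), measure_ne_top _ _⟩

instance (n : ℕ) [NeZero n] : IsProbabilityMeasure (sphMeasure n) where
  measure_univ := by
    have hm : Measurable (Subtype.val : sphere (0 : E n) 1 → E n) := measurable_subtype_coe
    rw [sphMeasure, Measure.smul_apply, smul_eq_mul, Measure.map_apply hm .univ]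
    exact ENNReal.inv_mul_cancel (Measure.measure_univ_ne_zero.2 (Measure.toSphere_ne_zero _))
      (measure_ne_top _ _)

/-- Under a Gaussian vector, the radial and the angular parts are independent, the latter being
uniform on the sphere. -/
lemma integral_gaussPi_radial_mul {n : ℕ} [NeZero n] (u : ℝ → ℝ) (h : E n → ℝ) :
    ∫ x, u ‖(WithLp.toLp 2 x : E n)‖ * h (‖(WithLp.toLp 2 x : E n)‖⁻¹ • WithLp.toLp 2 x)
        ∂gaussPi n =
      (∫ x, u ‖(WithLp.toLp 2 x : E n)‖ ∂gaussPi n) * ∫ θ, h θ ∂sphMeasure n := by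
  rw [integral_gaussPi n fun x ↦ u ‖x‖ * h (‖x‖⁻¹ • x), integral_gaussPi n fun x ↦ u ‖x‖,
    integral_sphMeasure]
  have h1 := integral_toSphere_mul (n := n) (fun r ↦ radialDensity n r * u r) h
  have h2 := integral_toSphere_mul (n := n) (fun r ↦ radialDensity n r * u r) fun _ ↦ 1
  simp only [mul_assoc, mul_one, integral_const, smul_eq_mul] at h1 h2
  have h0 := toSphere_real_univ_ne_zero n
  rw [h1, h2]
  field_simp

lemma memLp_eval_gaussPi {n : ℕ} (i : Fin n) : MemLp (fun x ↦ x i) 2 (gaussPi n) :=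
  (memLp_id_gaussianReal 2).comp_measurePreserving (measurePreserving_eval _ i)

lemma integral_eval_gaussPi {n : ℕ} (i : Fin n) : ∫ x, x i ∂gaussPi n = 0 := by
  have h := integral_map (μ := gaussPi n) (φ := fun x ↦ x i) (f := fun t : ℝ ↦ t)
    (measurable_pi_apply i).aemeasurable (by fun_prop)
  rw [(measurePreserving_eval (fun _ ↦ gauss) i).map_eq, integral_id_gaussianReal] at h
  exact h.symm

lemma integral_gauss_sq : ∫ t, t ^ 2 ∂gauss = 1 := by
  have h := variance_fun_id_gaussianReal (μ := 0) (v := 1)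
  rw [variance_eq_integral (by fun_prop)] at h
  simpa [integral_id_gaussianReal] using h

lemma integral_eval_sq_gaussPi {n : ℕ} (i : Fin n) : ∫ x, x i ^ 2 ∂gaussPi n = 1 := by
  have h := integral_map (μ := gaussPi n) (φ := fun x ↦ x i) (f := fun t : ℝ ↦ t ^ 2)
    (measurable_pi_apply i).aemeasurable (by fun_prop)
  rw [(measurePreserving_eval (fun _ ↦ gauss) i).map_eq, integral_gauss_sq] at h
  exact h.symm

lemma integral_norm_sq_gaussPi (n : ℕ) :
    ∫ x, ‖(WithLp.toLp 2 x : E n)‖ ^ 2 ∂gaussPi n = n := by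
  simp only [EuclideanSpace.norm_sq_eq, Real.norm_eq_abs, sq_abs]
  rw [integral_finsetSum _ fun i _ ↦ (memLp_eval_gaussPi i).integrable_sq]
  simp [integral_eval_sq_gaussPi]

lemma memLp_norm_gaussPi (n : ℕ) :
    MemLp (fun x ↦ ‖(WithLp.toLp 2 x : E n)‖) 2 (gaussPi n) := by
  refine (memLp_two_iff_integrable_sq (by fun_prop)).2 ?_
  simp only [EuclideanSpace.norm_sq_eq, Real.norm_eq_abs, sq_abs]
  exact integrable_finsetSum _ fun i _ ↦ (memLp_eval_gaussPi i).integrable_sq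

section HomogeneousExtension

variable {n : ℕ}

lemma hasGradientAt_gradient_of_contDiffAt {h : E n → ℝ} {x : E n} (hh : ContDiffAt ℝ 1 h x) :
    HasGradientAt h (gradient h x) x :=
  (hh.differentiableAt one_ne_zero).hasGradientAt

lemma contDiffAt_gradient {h : E n → ℝ} {x : E n} {k m : WithTop ℕ∞} (hh : ContDiffAt ℝ m h x)
    (hkm : k + 1 ≤ m) : ContDiffAt ℝ k (gradient h) x :=
  (InnerProductSpace.toDual ℝ (E n)).symm.contDiff.contDiffAt.comp x (hh.fderiv_right hkm)

lemma continuousOn_sgrad {h : E n → ℝ} (hh : ∀ θ ∈ sphere (0 : E n) 1, ContDiffAt ℝ 1 h θ) :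
    ContinuousOn (sgrad h) (sphere 0 1) := by
  have hg : ContinuousOn (gradient h) (sphere 0 1) := fun θ hθ ↦
    (contDiffAt_gradient (k := 0) (hh θ hθ) (by simp)).continuousAt.continuousWithinAt
  unfold sgrad
  fun_prop

lemma sgrad_inner_self {h : E n → ℝ} {θ : E n} (hθ : ‖θ‖ = 1) : ⟪sgrad h θ, θ⟫ = 0 := by
  simp [sgrad, inner_sub_left, real_inner_smul_left, hθ]

lemma norm_sq_gradient {h : E n → ℝ} {θ : E n} (hθ : ‖θ‖ = 1) :
    ‖gradient h θ‖ ^ 2 = ‖sgrad h θ‖ ^ 2 + ⟪gradient h θ, θ⟫ ^ 2 := by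
  have h1 : gradient h θ = sgrad h θ + ⟪gradient h θ, θ⟫ • θ := by simp [sgrad]
  have h2 : ⟪sgrad h θ, ⟪gradient h θ, θ⟫ • θ⟫ = 0 := by
    rw [real_inner_smul_right, sgrad_inner_self hθ, mul_zero]
  conv_lhs => rw [h1]
  rw [norm_add_sq_real, h2, norm_smul, hθ]
  simp

lemma mem_sphere_normalize {x : E n} (hx : x ≠ 0) : ‖x‖⁻¹ • x ∈ sphere (0 : E n) 1 := by
  simp [norm_smul, hx]

lemma norm_mul_eval_normalize (y : E n) (i : Fin n) : ‖y‖ * (‖y‖⁻¹ • y) i = y i := by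
  rcases eq_or_ne y 0 with rfl | hy
  · simp
  · simp [hy]

lemma hasDerivAt_norm_comp {c : ℝ → E n} {v : E n} {t : ℝ} (hc : HasDerivAt c v t)
    (h0 : c t ≠ 0) : HasDerivAt (fun s ↦ ‖c s‖) ⟪‖c t‖⁻¹ • c t, v⟫ t := by
  have h1 := hc.norm_sq.sqrt (by simpa using h0)
  simp only [Real.sqrt_sq (norm_nonneg _)] at h1
  refine h1.congr_deriv ?_
  have : ‖c t‖ ≠ 0 := norm_ne_zero_iff.2 h0
  rw [real_inner_smul_left]
  field_simp

/-- The derivative along a curve of the 1-homogeneous extension of a function on the sphere. -/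
lemma hasDerivAt_homogeneous_extension {h : E n → ℝ} {c : ℝ → E n} {v : E n} {t : ℝ}
    (hc : HasDerivAt c v t) (h0 : c t ≠ 0) (hh : ContDiffAt ℝ 1 h (‖c t‖⁻¹ • c t)) :
    HasDerivAt (fun s ↦ ‖c s‖ * h (‖c s‖⁻¹ • c s))
      ⟪h (‖c t‖⁻¹ • c t) • (‖c t‖⁻¹ • c t) + sgrad h (‖c t‖⁻¹ • c t), v⟫ t := by
  have hr : ‖c t‖ ≠ 0 := norm_ne_zero_iff.2 h0
  have hn := hasDerivAt_norm_comp hc h0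
  have hθ := (hn.inv hr).smul hc
  have hcomp := (hasGradientAt_gradient_of_contDiffAt hh).hasFDerivAt.comp_hasDerivAt t hθ
  refine (hn.mul hcomp).congr_deriv ?_
  simp only [Function.comp, sgrad, InnerProductSpace.toDual_apply_apply, inner_add_left,
    inner_add_right, inner_sub_left, real_inner_smul_left, real_inner_smul_right, Pi.inv_apply]
  have hs : ((fun s ↦ ‖c s‖)⁻¹ • c) t = ‖c t‖⁻¹ • c t := rfl
  rw [hs]
  field_simp
  ring

lemma ae_eval_ne_zero (i : Fin n) : ∀ᵐ x ∂gaussPi n, x i ≠ 0 := by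
  have : NullSingletonClass gauss := nullSingletonClass_gaussianReal one_ne_zero
  exact (measurePreserving_eval (fun _ ↦ gauss) i).quasiMeasurePreserving.ae (Measure.ae_ne _ 0)

lemma update_ne_zero_of_ne {x : Fin n → ℝ} {i j : Fin n} (hij : j ≠ i) (hj : x j ≠ 0) (t : ℝ) :
    (WithLp.toLp 2 (Function.update x i t) : E n) ≠ 0 := fun h0 ↦
  hj (by simpa [hij] using congrArg (fun y : E n ↦ y j) h0)

end HomogeneousExtension

section SpherePoincare

variable {n : ℕ} [NeZero n]

lemma ae_mem_sphere (n : ℕ) : ∀ᵐ θ ∂sphMeasure n, θ ∈ sphere (0 : E n) 1 := by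
  refine Measure.ae_smul_measure ?_ _
  refine (ae_map_iff (p := fun θ ↦ θ ∈ sphere (0 : E n) 1)
    measurable_subtype_coe.aemeasurable isClosed_sphere.measurableSet).2 ?_
  exact ae_of_all _ fun θ ↦ θ.2

lemma integrable_sphMeasure {F : E n → ℝ} (hF : ContinuousOn F (sphere 0 1)) :
    Integrable F (sphMeasure n) := by
  rw [← Measure.restrict_eq_self_of_ae_mem (ae_mem_sphere n)]
  exact hF.integrableOn_compact (isCompact_sphere 0 1)

lemma ae_toLp_ne_zero (n : ℕ) [NeZero n] : ∀ᵐ x ∂gaussPi n, (WithLp.toLp 2 x : E n) ≠ 0 := by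
  filter_upwards [ae_eval_ne_zero (0 : Fin n)] with x hx h0
  exact hx (by simpa using congrArg (fun y : E n ↦ y 0) h0)

lemma aestronglyMeasurable_comp_normalize {F : E n → ℝ} (hF : ContinuousOn F (sphere 0 1)) :
    AEStronglyMeasurable
      (fun x ↦ F (‖(WithLp.toLp 2 x : E n)‖⁻¹ • WithLp.toLp 2 x)) (gaussPi n) := by
  have hc : Continuous fun x : Fin n → ℝ ↦ (WithLp.toLp 2 x : E n) := by fun_prop
  rw [← Measure.restrict_eq_self_of_ae_mem (ae_toLp_ne_zero n)]
  refine ContinuousOn.aestronglyMeasurable (hF.comp ?_ fun x hx ↦ mem_sphere_normalize hx)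
    (isOpen_ne.preimage hc).measurableSet
  exact (hc.norm.continuousOn.inv₀ fun x hx ↦ norm_ne_zero_iff.2 hx).smul hc.continuousOn

lemma exists_bound_comp_normalize {F : E n → ℝ} (hF : ContinuousOn F (sphere 0 1)) :
    ∃ C, ∀ᵐ x ∂gaussPi n,
      ‖F (‖(WithLp.toLp 2 x : E n)‖⁻¹ • WithLp.toLp 2 x)‖ ≤ C := by
  obtain ⟨C, hC⟩ := (isCompact_sphere (0 : E n) 1).exists_bound_of_continuousOn hF
  exact ⟨C, (ae_toLp_ne_zero n).mono fun x hx ↦ hC _ (mem_sphere_normalize hx)⟩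

/-- The Poincaré inequality on the sphere for mean zero functions. -/
lemma sphere_poincare_of_integral_eq_zero (hn : 2 ≤ n) {h : E n → ℝ}
    (hh : ∀ θ ∈ sphere (0 : E n) 1, ContDiffAt ℝ 1 h θ) (h0 : ∫ θ, h θ ∂sphMeasure n = 0) :
    ((n : ℝ) - 1) * ∫ θ, h θ ^ 2 ∂sphMeasure n ≤ ∫ θ, ‖sgrad h θ‖ ^ 2 ∂sphMeasure n := by
  have hhc : ContinuousOn h (sphere 0 1) := fun θ hθ ↦ (hh θ hθ).continuousAt.continuousWithinAt
  have hsc := continuousOn_sgrad hh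
  set H : E n → E n := fun θ ↦ h θ • θ + sgrad h θ
  have hHc : ContinuousOn H (sphere 0 1) := by fun_prop
  have hHi : ∀ i, ContinuousOn (fun θ ↦ H θ i) (sphere 0 1) := fun i ↦ by fun_prop
  set g : (Fin n → ℝ) → ℝ := fun x ↦
    ‖(WithLp.toLp 2 x : E n)‖ * h (‖(WithLp.toLp 2 x : E n)‖⁻¹ • WithLp.toLp 2 x)
  set D : Fin n → (Fin n → ℝ) → ℝ := fun i x ↦
    H (‖(WithLp.toLp 2 x : E n)‖⁻¹ • WithLp.toLp 2 x) i
  have hg : MemLp g 2 (gaussPi n) := by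
    obtain ⟨C, hC⟩ := exists_bound_comp_normalize hhc
    refine (memLp_norm_gaussPi n).of_le_mul (c := C)
      ((memLp_norm_gaussPi n).1.mul (aestronglyMeasurable_comp_normalize hhc)) ?_
    filter_upwards [hC] with x hx
    rw [norm_mul, mul_comm]
    gcongr
  have hD : ∀ i, MemLp (D i) 2 (gaussPi n) := fun i ↦ by
    obtain ⟨C, hC⟩ := exists_bound_comp_normalize (hHi i)
    exact MemLp.of_bound (aestronglyMeasurable_comp_normalize (hHi i)) C hC
  have hder : ∀ i, ∀ᵐ x ∂gaussPi n,
      (∀ t, HasDerivAt (fun s ↦ g (Function.update x i s)) (D i (Function.update x i t)) t) ∧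
      Continuous fun t ↦ D i (Function.update x i t) := fun i ↦ by
    have : Nontrivial (Fin n) := Fin.nontrivial_iff_two_le.2 hn
    obtain ⟨j, hij⟩ := exists_ne i
    filter_upwards [ae_eval_ne_zero j] with x hx
    have hne := update_ne_zero_of_ne hij hx
    have hc : ∀ t, HasDerivAt (fun s ↦ (WithLp.toLp 2 (Function.update x i s) : E n))
        (EuclideanSpace.single i 1) t := fun t ↦
      (PiLp.continuousLinearEquiv 2 ℝ fun _ : Fin n ↦ ℝ).symm.hasFDerivAt.comp_hasDerivAt t
        (hasDerivAt_update x i t)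
    have hcc : Continuous fun s ↦ (WithLp.toLp 2 (Function.update x i s) : E n) :=
      continuous_iff_continuousAt.2 fun t ↦ (hc t).continuousAt
    constructor
    · intro t
      refine (hasDerivAt_homogeneous_extension (hc t) (hne t)
        (hh _ (mem_sphere_normalize (hne t)))).congr_deriv ?_
      simp [D, H, EuclideanSpace.inner_single_right]
    · exact (hHi i).comp_continuous
        ((hcc.norm.inv₀ fun t ↦ norm_ne_zero_iff.2 (hne t)).smul hcc)
        fun t ↦ mem_sphere_normalize (hne t)
  have key := gaussPi_poincare hg hD hder
  have e1 : ∫ x, g x ^ 2 ∂gaussPi n = n * ∫ θ, h θ ^ 2 ∂sphMeasure n := by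
    rw [← integral_norm_sq_gaussPi n,
      ← integral_gaussPi_radial_mul (fun r ↦ r ^ 2) fun θ ↦ h θ ^ 2]
    simp only [g, mul_pow]
  have e2 : ∫ x, g x ∂gaussPi n = 0 := by
    rw [integral_gaussPi_radial_mul (fun r ↦ r) h, h0, mul_zero]
  have e3 : ∀ i, ∫ x, D i x ^ 2 ∂gaussPi n = ∫ θ, H θ i ^ 2 ∂sphMeasure n := fun i ↦ by
    simpa using integral_gaussPi_radial_mul (fun _ ↦ 1) fun θ ↦ H θ i ^ 2
  have e4 : ∑ i, ∫ θ, H θ i ^ 2 ∂sphMeasure n =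
      ∫ θ, h θ ^ 2 ∂sphMeasure n + ∫ θ, ‖sgrad h θ‖ ^ 2 ∂sphMeasure n := by
    have i1 : ∀ i, Integrable (fun θ ↦ H θ i ^ 2) (sphMeasure n) := fun i ↦
      integrable_sphMeasure ((hHi i).pow 2)
    have i2 : Integrable (fun θ ↦ h θ ^ 2) (sphMeasure n) := integrable_sphMeasure (hhc.pow 2)
    have i3 : Integrable (fun θ ↦ ‖sgrad h θ‖ ^ 2) (sphMeasure n) :=
      integrable_sphMeasure (hsc.norm.pow 2)
    rw [← integral_finsetSum _ fun i _ ↦ i1 i, ← integral_add i2 i3]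
    refine integral_congr_ae ?_
    filter_upwards [ae_mem_sphere n] with θ hθ
    have hθ1 : ‖θ‖ = 1 := by simpa using hθ
    have : ∑ i, H θ i ^ 2 = ‖H θ‖ ^ 2 := by simp [EuclideanSpace.norm_sq_eq]
    rw [this, norm_add_sq_real, real_inner_smul_left, real_inner_comm, sgrad_inner_self hθ1,
      norm_smul, hθ1]
    simp
  simp only [e1, e2, e3] at key
  rw [e4] at key
  linarith

end SpherePoincare

section CoordinateMoments

variable {n : ℕ} [NeZero n]

lemma integral_norm_gaussPi_ne_zero (n : ℕ) [NeZero n] :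
    ∫ x, ‖(WithLp.toLp 2 x : E n)‖ ∂gaussPi n ≠ 0 := fun h0 ↦ by
  rw [integral_eq_zero_iff_of_nonneg (fun x ↦ norm_nonneg _)
    ((memLp_norm_gaussPi n).integrable one_le_two)] at h0
  obtain ⟨x, hx, hx0⟩ := (h0.and (ae_toLp_ne_zero n)).exists
  exact hx0 (norm_eq_zero.1 hx)

lemma integral_eval_sphMeasure (i : Fin n) : ∫ θ, θ i ∂sphMeasure n = 0 := by
  have h1 := integral_gaussPi_radial_mul (n := n) (fun r ↦ r) fun θ ↦ θ i
  simp only [norm_mul_eval_normalize, integral_eval_gaussPi] at h1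
  exact (mul_eq_zero.1 h1.symm).resolve_left (integral_norm_gaussPi_ne_zero n)

lemma natCast_mul_integral_eval_sq_sphMeasure (i : Fin n) :
    n * ∫ θ, θ i ^ 2 ∂sphMeasure n = 1 := by
  have h1 := integral_gaussPi_radial_mul (n := n) (fun r ↦ r ^ 2) fun θ ↦ θ i ^ 2
  simp only [← mul_pow, norm_mul_eval_normalize, integral_eval_sq_gaussPi,
    integral_norm_sq_gaussPi] at h1
  exact h1.symm

end CoordinateMoments

section SecondOrder

variable {n : ℕ}

lemma inner_gradient {h : E n → ℝ} {x v : E n} : ⟪gradient h x, v⟫ = fderiv ℝ h x v := by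
  simp [gradient]

lemma gradient_eval_add_mul {f : E n → ℝ} {x : E n} (hf : ContDiffAt ℝ 1 f x) (i : Fin n)
    (s m : ℝ) : gradient (fun y ↦ y i + s * (f y - m)) x =
      EuclideanSpace.single i 1 + s • gradient f x := by
  refine ext_inner_right ℝ fun v ↦ ?_
  have h1 : HasFDerivAt (fun y : E n ↦ y i) (EuclideanSpace.proj i : E n →L[ℝ] ℝ) x :=
    (EuclideanSpace.proj i : E n →L[ℝ] ℝ).hasFDerivAt
  have h2 : HasFDerivAt (fun y : E n ↦ y i + s * (f y - m)) _ x :=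
    h1.add (((hf.differentiableAt one_ne_zero).hasFDerivAt.sub_const m).const_mul s)
  rw [inner_gradient, h2.fderiv, inner_add_left, real_inner_smul_left, inner_gradient]
  simp [EuclideanSpace.inner_single_left]

lemma norm_sq_sgrad_eval_add_mul {f : E n → ℝ} {θ : E n} (hθ : ‖θ‖ = 1) (hf : ContDiffAt ℝ 1 f θ)
    (i : Fin n) (s m : ℝ) : ‖sgrad (fun y ↦ y i + s * (f y - m)) θ‖ ^ 2 =
      1 - θ i ^ 2 + 2 * s * sgrad f θ i + s ^ 2 * ‖sgrad f θ‖ ^ 2 := by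
  have h1 : sgrad (fun y ↦ y i + s * (f y - m)) θ =
      (EuclideanSpace.single i 1 - θ i • θ) + s • sgrad f θ := by
    rw [sgrad, gradient_eval_add_mul hf, sgrad, inner_add_left, real_inner_smul_left]
    simp only [EuclideanSpace.inner_single_left, map_one, one_mul]
    module
  have h2 : ‖(EuclideanSpace.single i 1 - θ i • θ : E n)‖ ^ 2 = 1 - θ i ^ 2 := by
    rw [norm_sub_sq_real, real_inner_smul_right, norm_smul, hθ]
    simp [EuclideanSpace.inner_single_left]
    ring
  have h3 : ⟪(EuclideanSpace.single i 1 - θ i • θ : E n), s • sgrad f θ⟫ = s * sgrad f θ i := by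
    rw [real_inner_smul_right, inner_sub_left, real_inner_smul_left,
      real_inner_comm (sgrad f θ) θ, sgrad_inner_self hθ]
    simp [EuclideanSpace.inner_single_left]
  rw [h1, norm_add_sq_real, h2, h3, norm_smul, mul_pow, Real.norm_eq_abs, sq_abs]
  ring

/-- The spherical gradient of a function orthogonal to linear functions has mean zero. -/
lemma integral_sgrad_eval_eq_zero (hn : 2 ≤ n) {f : E n → ℝ}
    (hf : ∀ θ ∈ sphere (0 : E n) 1, ContDiffAt ℝ 1 f θ) (i : Fin n)
    (hlin : ∫ θ, θ i * f θ ∂sphMeasure n = 0) : ∫ θ, sgrad f θ i ∂sphMeasure n = 0 := by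
  have : NeZero n := ⟨by lia⟩
  have hfc : ContinuousOn f (sphere 0 1) := fun θ hθ ↦ (hf θ hθ).continuousAt.continuousWithinAt
  have hsc := continuousOn_sgrad hf
  set m := ∫ θ, f θ ∂sphMeasure n
  have ix : Integrable (fun θ : E n ↦ θ i) (sphMeasure n) := integrable_sphMeasure (by fun_prop)
  have ix2 : Integrable (fun θ : E n ↦ θ i ^ 2) (sphMeasure n) :=
    integrable_sphMeasure (by fun_prop)
  have if0 : Integrable f (sphMeasure n) := integrable_sphMeasure hfc
  have ifm : Integrable (fun θ ↦ f θ - m) (sphMeasure n) := integrable_sphMeasure (by fun_prop)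
  have ifm2 : Integrable (fun θ ↦ (f θ - m) ^ 2) (sphMeasure n) :=
    integrable_sphMeasure (by fun_prop)
  have ixf : Integrable (fun θ ↦ θ i * f θ) (sphMeasure n) := integrable_sphMeasure (by fun_prop)
  have ixfm : Integrable (fun θ ↦ θ i * (f θ - m)) (sphMeasure n) :=
    integrable_sphMeasure (by fun_prop)
  have is1 : Integrable (fun θ ↦ sgrad f θ i) (sphMeasure n) := integrable_sphMeasure (by fun_prop)
  have is2 : Integrable (fun θ ↦ ‖sgrad f θ‖ ^ 2) (sphMeasure n) :=
    integrable_sphMeasure (by fun_prop)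
  set A := ∫ θ, sgrad f θ i ∂sphMeasure n
  set B := ∫ θ, ‖sgrad f θ‖ ^ 2 ∂sphMeasure n
  have hB : 0 ≤ B := integral_nonneg fun θ ↦ by positivity
  have e0 : ∫ θ, (f θ - m) ∂sphMeasure n = 0 := by
    rw [integral_sub if0 (integrable_const m)]
    simp [m]
  have ex : ∫ θ, θ i * (f θ - m) ∂sphMeasure n = 0 := by
    simp only [mul_sub]
    rw [integral_sub ixf (ix.mul_const m), hlin, integral_mul_const, integral_eval_sphMeasure]
    simp
  have hq : ∀ s : ℝ, 0 ≤ 2 * s * A + s ^ 2 * B := fun s ↦ by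
    have hmean : ∫ θ, (θ i + s * (f θ - m)) ∂sphMeasure n = 0 := by
      rw [integral_add ix (ifm.const_mul s), integral_const_mul, e0, integral_eval_sphMeasure]
      simp
    have key := sphere_poincare_of_integral_eq_zero (h := fun θ ↦ θ i + s * (f θ - m)) hn
      (fun θ hθ ↦ (EuclideanSpace.proj i : E n →L[ℝ] ℝ).contDiff.contDiffAt.add
        (contDiffAt_const.mul ((hf θ hθ).sub contDiffAt_const))) hmean
    have h1 : ∫ θ, (θ i + s * (f θ - m)) ^ 2 ∂sphMeasure n =
        ∫ θ, θ i ^ 2 ∂sphMeasure n + s ^ 2 * ∫ θ, (f θ - m) ^ 2 ∂sphMeasure n := by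
      have : ∀ θ : E n, (θ i + s * (f θ - m)) ^ 2 =
          θ i ^ 2 + 2 * s * (θ i * (f θ - m)) + s ^ 2 * (f θ - m) ^ 2 := fun θ ↦ by ring
      simp only [this]
      have i1 : Integrable (fun θ ↦ θ i ^ 2 + 2 * s * (θ i * (f θ - m))) (sphMeasure n) :=
        ix2.add (ixfm.const_mul _)
      rw [integral_add i1 (ifm2.const_mul _), integral_add ix2 (ixfm.const_mul _),
        integral_const_mul, integral_const_mul, ex]
      ring
    have h2 : ∫ θ, ‖sgrad (fun y ↦ y i + s * (f y - m)) θ‖ ^ 2 ∂sphMeasure n =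
        1 - ∫ θ, θ i ^ 2 ∂sphMeasure n + 2 * s * A + s ^ 2 * B := by
      have : ∫ θ, ‖sgrad (fun y ↦ y i + s * (f y - m)) θ‖ ^ 2 ∂sphMeasure n =
          ∫ θ, (1 - θ i ^ 2 + 2 * s * sgrad f θ i + s ^ 2 * ‖sgrad f θ‖ ^ 2) ∂sphMeasure n := by
        refine integral_congr_ae ((ae_mem_sphere n).mono fun θ hθ ↦ ?_)
        exact norm_sq_sgrad_eval_add_mul (by simpa using hθ) (hf θ hθ) i s m
      have i1 : Integrable (fun θ : E n ↦ 1 - θ i ^ 2) (sphMeasure n) :=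
        (integrable_const 1).sub ix2
      have i2 : Integrable (fun θ ↦ 1 - θ i ^ 2 + 2 * s * sgrad f θ i) (sphMeasure n) :=
        i1.add (is1.const_mul _)
      rw [this, integral_add i2 (is2.const_mul _), integral_add i1 (is1.const_mul _),
        integral_sub (integrable_const 1) ix2, integral_const_mul, integral_const_mul]
      simp [A, B]
    rw [h1, h2] at key
    have hV : 0 ≤ ∫ θ, (f θ - m) ^ 2 ∂sphMeasure n := integral_nonneg fun θ ↦ by positivity
    have hn' : (2 : ℝ) ≤ n := by exact_mod_cast hn
    have := natCast_mul_integral_eval_sq_sphMeasure (n := n) i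
    have : 0 ≤ ((n : ℝ) - 1) * (s ^ 2 * ∫ θ, (f θ - m) ^ 2 ∂sphMeasure n) := by
      have : (0 : ℝ) ≤ n - 1 := by linarith
      positivity
    linarith
  have h3 := hq (-A / (1 + B))
  have h4 : 2 * (-A / (1 + B)) * A + (-A / (1 + B)) ^ 2 * B = -(A ^ 2 * (2 + B) / (1 + B) ^ 2) := by
    field_simp
    ring
  have h5 : A ^ 2 * (2 + B) / (1 + B) ^ 2 ≤ 0 := by linarith
  have h6 : A ^ 2 * (2 + B) ≤ 0 := by
    have : 0 < (1 + B) ^ 2 := by positivity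
    by_contra! h
    exact absurd h5 (not_le.2 (by positivity))
  have h7 : A ^ 2 ≤ 0 := by nlinarith [sq_nonneg A]
  exact pow_eq_zero_iff two_ne_zero |>.1 (le_antisymm h7 (sq_nonneg A))

lemma sum_norm_sq_gradient_eval_gradient {f : E n → ℝ} {x : E n} (hf : ContDiffAt ℝ 2 f x)
    (c : Fin n → ℝ) :
    ∑ i, ‖gradient (fun y ↦ gradient f y i - c i) x‖ ^ 2 = hsNormSq (hess f x) := by
  have hd : HasFDerivAt (gradient f) (hess f x) x :=
    ((contDiffAt_gradient (k := 1) hf (by norm_num)).differentiableAt one_ne_zero).hasFDerivAt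
  have hc : ∀ i j, gradient (fun y ↦ gradient f y i - c i) x j =
      hess f x (EuclideanSpace.single j 1) i := fun i j ↦ by
    have h1 := ((EuclideanSpace.proj i : E n →L[ℝ] ℝ).hasFDerivAt.comp x hd).sub_const (c i)
    have h2 : gradient (fun y ↦ gradient f y i - c i) x j =
        ⟪gradient (fun y ↦ gradient f y i - c i) x, EuclideanSpace.single j 1⟫ := by
      rw [EuclideanSpace.inner_single_right]
      simp
    rw [h2, inner_gradient]
    exact congrArg (fun L : E n →L[ℝ] ℝ ↦ L (EuclideanSpace.single j 1)) h1.fderiv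
  simp only [hsNormSq, EuclideanSpace.real_norm_sq_eq, hc]
  exact Finset.sum_comm

lemma continuousOn_hess {f : E n → ℝ} (hf : ∀ θ ∈ sphere (0 : E n) 1, ContDiffAt ℝ 2 f θ) :
    ContinuousOn (hess f) (sphere 0 1) := fun θ hθ ↦
  ((contDiffAt_gradient (k := 1) (hf θ hθ) (by norm_num)).fderiv_right (m := 0)
    (by norm_num)).continuousAt.continuousWithinAt

/-- The squared distance of a vector to `c` dominates that of its tangential part, up to a term
linear in `c`. -/
lemma norm_sq_sgrad_sub_le {f : E n → ℝ} {θ : E n} (hθ : ‖θ‖ = 1) (c : E n) :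
    ‖sgrad f θ‖ ^ 2 - 2 * ⟪sgrad f θ, c⟫ ≤ ‖gradient f θ - c‖ ^ 2 := by
  have h1 : ⟪sgrad f θ, c⟫ = ⟪gradient f θ, c⟫ - ⟪gradient f θ, θ⟫ * ⟪θ, c⟫ := by
    rw [sgrad, inner_sub_left, real_inner_smul_left]
  have h2 : ⟪θ, c⟫ ^ 2 ≤ ‖c‖ ^ 2 := by
    rw [← sq_abs]
    gcongr
    simpa [hθ] using abs_real_inner_le_norm θ c
  rw [norm_sub_sq_real, norm_sq_gradient hθ, h1]
  nlinarith [sq_nonneg (⟪gradient f θ, θ⟫ - ⟪θ, c⟫)]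

end SecondOrder

end GaussianPoincare

/-- **(6.2) in the proof of Proposition 6.1 (Statement 15).** -/
theorem sgrad_int_le_euclidean_hess_int
    {n : ℕ} (hn : 2 ≤ n) (f : E n → ℝ) (U : Set (E n)) (hU : IsOpen U)
    (hUS : Metric.sphere (0 : E n) 1 ⊆ U) (hf : ContDiffOn ℝ 2 f U)
    (hlin : ∀ v : E n, ∫ θ, ⟪v, θ⟫ * f θ ∂sphMeasure n = 0) :
    ∫ θ, ‖sgrad f θ‖ ^ 2 ∂sphMeasure n ≤
      (1 / ((n : ℝ) - 1)) * ∫ θ, hsNormSq (hess f θ) ∂sphMeasure n := by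
  have : NeZero n := ⟨by lia⟩
  have hf2 : ∀ θ ∈ sphere (0 : E n) 1, ContDiffAt ℝ 2 f θ := fun θ hθ ↦
    hf.contDiffAt (hU.mem_nhds (hUS hθ))
  have hf1 : ∀ θ ∈ sphere (0 : E n) 1, ContDiffAt ℝ 1 f θ := fun θ hθ ↦
    (hf2 θ hθ).of_le one_le_two
  have hg1 : ∀ θ ∈ sphere (0 : E n) 1, ContDiffAt ℝ 1 (gradient f) θ := fun θ hθ ↦
    contDiffAt_gradient (hf2 θ hθ) (by norm_num)
  have hgc : ContinuousOn (gradient f) (sphere 0 1) := fun θ hθ ↦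
    (hg1 θ hθ).continuousAt.continuousWithinAt
  have hsc := continuousOn_sgrad hf1
  have hHc := continuousOn_hess hf2
  set c : E n := WithLp.toLp 2 fun i ↦ ∫ θ, gradient f θ i ∂sphMeasure n with hc
  set h : Fin n → E n → ℝ := fun i θ ↦ gradient f θ i - c i
  have hh1 : ∀ i, ∀ θ ∈ sphere (0 : E n) 1, ContDiffAt ℝ 1 (h i) θ := fun i θ hθ ↦
    ((EuclideanSpace.proj i : E n →L[ℝ] ℝ).contDiff.contDiffAt.comp θ (hg1 θ hθ)).sub
      contDiffAt_const
  have hhc : ∀ i, ContinuousOn (h i) (sphere 0 1) := fun i ↦ by fun_prop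
  have hhg : ∀ i, ContinuousOn (gradient (h i)) (sphere 0 1) := fun i θ hθ ↦
    (contDiffAt_gradient (k := 0) (hh1 i θ hθ) (by norm_num)).continuousAt.continuousWithinAt
  have hmean : ∀ i, ∫ θ, h i θ ∂sphMeasure n = 0 := fun i ↦ by
    rw [integral_sub (integrable_sphMeasure (by fun_prop)) (integrable_const _)]
    simp [hc]
  have hpoinc : ∀ i, ((n : ℝ) - 1) * ∫ θ, h i θ ^ 2 ∂sphMeasure n ≤
      ∫ θ, ‖gradient (h i) θ‖ ^ 2 ∂sphMeasure n := fun i ↦ by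
    refine (sphere_poincare_of_integral_eq_zero hn (hh1 i) (hmean i)).trans ?_
    refine integral_mono_ae
      (integrable_sphMeasure ((continuousOn_sgrad (hh1 i)).norm.pow 2))
      (integrable_sphMeasure ((hhg i).norm.pow 2)) ((ae_mem_sphere n).mono fun θ hθ ↦ ?_)
    beta_reduce
    rw [norm_sq_gradient (by simpa using hθ)]
    exact le_add_of_nonneg_right (sq_nonneg _)
  have ih2 : ∀ i, Integrable (fun θ ↦ h i θ ^ 2) (sphMeasure n) := fun i ↦
    integrable_sphMeasure ((hhc i).pow 2)
  have ihg : ∀ i, Integrable (fun θ ↦ ‖gradient (h i) θ‖ ^ 2) (sphMeasure n) := fun i ↦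
    integrable_sphMeasure ((hhg i).norm.pow 2)
  have is2 : Integrable (fun θ ↦ ‖sgrad f θ‖ ^ 2) (sphMeasure n) :=
    integrable_sphMeasure (hsc.norm.pow 2)
  have isi : ∀ i, Integrable (fun θ ↦ sgrad f θ i * c i) (sphMeasure n) := fun i ↦
    integrable_sphMeasure (by fun_prop)
  have isc : Integrable (fun θ ↦ ⟪sgrad f θ, c⟫) (sphMeasure n) :=
    integrable_sphMeasure (by fun_prop)
  have igc : Integrable (fun θ ↦ ‖gradient f θ - c‖ ^ 2) (sphMeasure n) :=
    integrable_sphMeasure (by fun_prop)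
  have hcross : ∫ θ, ⟪sgrad f θ, c⟫ ∂sphMeasure n = 0 := by
    have : ∀ θ, ⟪sgrad f θ, c⟫ = ∑ i, sgrad f θ i * c i := fun θ ↦ by
      simp [PiLp.inner_apply, mul_comm]
    simp only [this]
    rw [integral_finsetSum _ fun i _ ↦ isi i]
    refine Finset.sum_eq_zero fun i _ ↦ ?_
    have hl : ∫ θ, θ i * f θ ∂sphMeasure n = 0 := by
      simpa [EuclideanSpace.inner_single_left] using hlin (EuclideanSpace.single i 1)
    rw [integral_mul_const, integral_sgrad_eval_eq_zero hn hf1 i hl, zero_mul]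
  have hlower : ∫ θ, ‖sgrad f θ‖ ^ 2 ∂sphMeasure n ≤ ∑ i, ∫ θ, h i θ ^ 2 ∂sphMeasure n := by
    calc ∫ θ, ‖sgrad f θ‖ ^ 2 ∂sphMeasure n
        = ∫ θ, (‖sgrad f θ‖ ^ 2 - 2 * ⟪sgrad f θ, c⟫) ∂sphMeasure n := by
          rw [integral_sub is2 (isc.const_mul 2), integral_const_mul, hcross]
          simp
      _ ≤ ∫ θ, ‖gradient f θ - c‖ ^ 2 ∂sphMeasure n :=
          integral_mono_ae (is2.sub (isc.const_mul 2)) igc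
            ((ae_mem_sphere n).mono fun θ hθ ↦ norm_sq_sgrad_sub_le (by simpa using hθ) c)
      _ = ∑ i, ∫ θ, h i θ ^ 2 ∂sphMeasure n := by
          rw [← integral_finsetSum _ fun i _ ↦ ih2 i]
          simp [EuclideanSpace.real_norm_sq_eq, h]
  have hupper : ∑ i, ∫ θ, ‖gradient (h i) θ‖ ^ 2 ∂sphMeasure n =
      ∫ θ, hsNormSq (hess f θ) ∂sphMeasure n := by
    rw [← integral_finsetSum _ fun i _ ↦ ihg i]
    exact integral_congr_ae ((ae_mem_sphere n).mono fun θ hθ ↦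
      sum_norm_sq_gradient_eval_gradient (hf2 θ hθ) _)
  have hn' : (0 : ℝ) < n - 1 := by
    have : (2 : ℝ) ≤ n := by exact_mod_cast hn
    linarith
  rw [one_div, ← hupper, le_inv_mul_iff₀ hn']
  refine (mul_le_mul_of_nonneg_left hlower hn'.le).trans ?_
  rw [Finset.mul_sum]
  exact Finset.sum_le_sum fun i _ ↦ hpoinc i

end SecondOrderConc
end
end
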